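/- Let n ≥ 4 be an even integer and let V̂(x,t) = 2n (2 ū(x,t) φ(x,t) + φ(x,t)²)^{n−1} (ū(x,t) + φ(x,t)). Then there exist τ₁ ≥ 1 and a constant c > 0 such that for all t ≥ τ₁, the negative part of V̂ satisfies sup_{x∈ℝ} max(−V̂(x,t), 0) ≤ c t^{−γ(n−1)(δ'+1)}, where δ' = (√(4nδ(δ+1)+1) − 1)/2 if n ≤ 5 and δ' = 2δ + 1 if n ≥ 6. -/

import Mathlib

noncomputable def kap : ℝ := 1 / Real.sqrt Real.pi

noncomputable def kap3 : ℝ := -kap / 12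

noncomputable def gam (n : ℕ) : ℝ := 1 / (2 * (n : ℝ) + 1)

noncomputable def eps (n : ℕ) : ℝ := 1 / ((n : ℝ) - 1)

noncomputable def alph (n : ℕ) : ℝ := 1 / 2 - gam n

noncomputable def del (n : ℕ) : ℝ := ((n : ℝ) + 2) / ((n : ℝ) - 1)

noncomputable def lam (n : ℕ) : ℝ :=
  (del n * (del n + 1) / (2 * kap) ^ n) ^ (1 / ((n : ℝ) - 1))

noncomputable def lam0 (n : ℕ) : ℝ :=
  (lam n / (2 * kap)) *
    (-2 * (n : ℝ) * kap3 * del n * (del n + 1) - kap * (del n - 2 * eps n)) /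
    (((n : ℝ) - 1) * del n * (del n + 1) + 2 * (2 * del n - 1))

def IsReactiveProfile (n : ℕ) (η : ℝ → ℝ) : Prop :=
  ContDiffOn ℝ 2 η (Set.Ici 0) ∧
  (∀ z ∈ Set.Ici (0:ℝ), 0 < η z) ∧
  (∀ z ∈ Set.Ici (0:ℝ),
    derivWithin (derivWithin η (Set.Ici 0)) (Set.Ici 0) z
      = (2 * kap * z * η z + (η z) ^ 2) ^ n) ∧
  derivWithin η (Set.Ici 0) 0 = -kap ∧
  Filter.Tendsto η Filter.atTop (nhds 0)

/-- The corrector h: C² on [0,∞), satisfies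
h'' + γη + αzη' = n(2κzη+η²)^{n−1}((2κz+2η)h + 2κ₃z³η), h'(0) = 0,
h(z) − λ₀ z^{2−δ} → 0 as z → ∞. -/
def IsCorrector (n : ℕ) (η h : ℝ → ℝ) : Prop :=
  ContDiffOn ℝ 2 h (Set.Ici 0) ∧
  (∀ z ∈ Set.Ici (0:ℝ),
    derivWithin (derivWithin h (Set.Ici 0)) (Set.Ici 0) z + gam n * η z
        + alph n * z * derivWithin η (Set.Ici 0) z
      = (n : ℝ) * (2 * kap * z * η z + (η z) ^ 2) ^ (n - 1)
          * ((2 * kap * z + 2 * η z) * h z + 2 * kap3 * z ^ 3 * η z)) ∧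
  derivWithin h (Set.Ici 0) 0 = 0 ∧
  Filter.Tendsto (fun z : ℝ => h z - lam0 n * z ^ (2 - del n)) Filter.atTop (nhds 0)

noncomputable def mu1 (y : ℝ) : ℝ :=
  (2 / Real.sqrt Real.pi) * ∫ σ in (0:ℝ)..(y / 2), Real.exp (-σ ^ 2)

def IsDiffusiveProfile (n : ℕ) (μ : ℝ → ℝ) : Prop :=
  ContDiffOn ℝ 2 μ (Set.Ioi 0) ∧
  (∀ y ∈ Set.Ioi (0:ℝ), 0 < μ y) ∧
  (∀ y ∈ Set.Ioi (0:ℝ),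
    deriv (deriv μ) y + y / 2 * deriv μ y + eps n * μ y = (2 * mu1 y * μ y) ^ n) ∧
  Filter.Tendsto (fun y : ℝ => y ^ del n * μ y) (nhdsWithin 0 (Set.Ioi 0)) (nhds (lam n)) ∧
  Filter.Tendsto (fun y : ℝ => y ^ (2 * eps n) * μ y) Filter.atTop (nhds 0)

/-- u(x,t) = −erf(x/(2√t)). -/
noncomputable def uu (x t : ℝ) : ℝ := -mu1 (x / Real.sqrt t)

/-- ū(x,t) = μ₁(|x|/√t). -/
noncomputable def ubar (x t : ℝ) : ℝ := mu1 (|x| / Real.sqrt t)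

/-- φ₁(z) = η(z) − λ z^{−δ}. -/
noncomputable def phi1 (n : ℕ) (η : ℝ → ℝ) (z : ℝ) : ℝ := η z - lam n * z ^ (-(del n))

/-- φ₂(z) = −λ₀ z^{2−δ} + h(z). -/
noncomputable def phi2 (n : ℕ) (h : ℝ → ℝ) (z : ℝ) : ℝ := -lam0 n * z ^ (2 - del n) + h z

/-- μ₃(y) = μ₂(y) − λ y^{−δ}. -/
noncomputable def mu3 (n : ℕ) (μ : ℝ → ℝ) (y : ℝ) : ℝ := μ y - lam n * y ^ (-(del n))

/-- The asymptotic profile v_∞. -/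
noncomputable def vInf (n : ℕ) (η μ h : ℝ → ℝ) (x t : ℝ) : ℝ :=
  mu1 (|x| / Real.sqrt t) + t ^ (-(eps n)) * μ (|x| / Real.sqrt t)
    + t ^ (-(gam n)) * phi1 n η (|x| / t ^ alph n)
    + t ^ (-(3 * gam n)) * phi2 n h (|x| / t ^ alph n)

/-- φ(x,t) = t^{−γ} η(|z|) + t^{−ε} μ₃(|y|) + t^{−3γ} φ₂(|z|). -/
noncomputable def phiFun (n : ℕ) (η μ h : ℝ → ℝ) (x t : ℝ) : ℝ :=
  t ^ (-(gam n)) * η (|x| / t ^ alph n) + t ^ (-(eps n)) * mu3 n μ (|x| / Real.sqrt t)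
    + t ^ (-(3 * gam n)) * phi2 n h (|x| / t ^ alph n)

noncomputable def delp (n : ℕ) : ℝ :=
  if n ≤ 5 then (Real.sqrt (4 * (n : ℝ) * del n * (del n + 1) + 1) - 1) / 2
  else 2 * del n + 1

/-- The potential V̂(x,t) = 2n (2ūφ + φ²)^{n−1} (ū + φ). -/
noncomputable def Vhat (n : ℕ) (η μ h : ℝ → ℝ) (x t : ℝ) : ℝ :=
  2 * (n : ℝ) * (2 * ubar x t * phiFun n η μ h x t + phiFun n η μ h x t ^ 2) ^ (n - 1)
    * (ubar x t + phiFun n η μ h x t)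

/-!
In the inner variables `z = |x| / t ^ α`, `T = t ^ γ` one has
`T * φ = η z + T ^ (-δ) * μ₃ (z / T) + T ^ (-2) * φ₂ z`. Since `V̂` is negative only where `φ` is,
and there `|V̂| ≲ |φ| ^ (n - 1)`, it is enough that `T * φ ≥ -C * T ^ (-δ')` uniformly in `z ≥ 0`.

For bounded `z` the positive term `η z` dominates. For large `z`, both `λ * z ^ (-δ) - η` and `-φ₂`
are subsolutions of perturbations of the Euler equation `w'' = n * δ * (δ + 1) / z ^ 2 * w`. As
`δ' * (δ' + 1) ≤ n * δ * (δ + 1)`, comparison with a barrier of order `z ^ (-δ')` bounds them by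
`O(z ^ (-δ'))` and `O(z ^ (2 - δ'))`; the condition `δ' ≤ 2 * δ + 1` comes from the source term, the
quadratic part of the reaction. The terms `λ * z ^ (-δ)` of `η` and `μ₃` cancel, which leaves
`T ^ (-δ) * μ₂ (z / T)` against an error `O((1 + (z / T) ^ 2) * z ^ (-δ'))`. When `z ≲ T`, the bound
`μ₂ y ≥ λ * y ^ (-δ) * (1 - y ^ 2)` makes the first win; when `z ≳ T`, the error itself is
`O(T ^ (-δ'))`.
-/

open Set Filter Topology

/-! ### Second-order comparison principles -/

theorem deriv_deriv_nonpos_of_isLocalMax {f f' : ℝ → ℝ} {f'' x : ℝ}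
    (hf : ∀ᶠ y in 𝓝 x, HasDerivAt f (f' y) y) (hf' : HasDerivAt f' f'' x)
    (hmax : IsLocalMax f x) : f'' ≤ 0 := by
  by_contra! hpos
  have hderiv : deriv f =ᶠ[𝓝 x] f' := hf.mono fun y hy => hy.deriv
  have hmin : IsLocalMin f x :=
    isLocalMin_of_deriv_deriv_pos (by rwa [hderiv.deriv_eq, hf'.deriv]) hmax.deriv_eq_zero
      hf.self_of_nhds.continuousAt
  -- a point that is both a local maximum and a local minimum has a constant neighbourhood
  have hconst : f =ᶠ[𝓝 x] fun _ => f x := by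
    filter_upwards [hmax, hmin] with y h₁ h₂ using le_antisymm h₁ h₂
  have hzero : f' =ᶠ[𝓝 x] fun _ => 0 := by
    filter_upwards [hderiv, hconst.deriv] with y h₁ h₂
    rw [← h₁, h₂, deriv_const]
  exact hpos.ne' (hf'.unique ((hasDerivAt_const x (0 : ℝ)).congr_of_eventuallyEq hzero))

/-- `f'` and `f''` are the first and second derivatives of `f` at every point of `s`. Carrying them
as explicit functions avoids the junk values of iterated `deriv`. -/
def HasDerivs₂On (f f' f'' : ℝ → ℝ) (s : Set ℝ) : Prop :=
  ∀ z ∈ s, HasDerivAt f (f' z) z ∧ HasDerivAt f' (f'' z) z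

namespace HasDerivs₂On

variable {f f' f'' g g' g'' : ℝ → ℝ} {s t : Set ℝ}

theorem mono (hf : HasDerivs₂On f f' f'' s) (hts : t ⊆ s) : HasDerivs₂On f f' f'' t :=
  fun z hz => hf z (hts hz)

theorem continuousOn (hf : HasDerivs₂On f f' f'' s) : ContinuousOn f s :=
  fun z hz => (hf z hz).1.continuousAt.continuousWithinAt

theorem const_mul (c : ℝ) (hf : HasDerivs₂On f f' f'' s) :
    HasDerivs₂On (fun z => c * f z) (fun z => c * f' z) (fun z => c * f'' z) s :=
  fun z hz => ⟨(hf z hz).1.const_mul c, (hf z hz).2.const_mul c⟩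

theorem add (hf : HasDerivs₂On f f' f'' s) (hg : HasDerivs₂On g g' g'' s) :
    HasDerivs₂On (fun z => f z + g z) (fun z => f' z + g' z) (fun z => f'' z + g'' z) s :=
  fun z hz => ⟨(hf z hz).1.add (hg z hz).1, (hf z hz).2.add (hg z hz).2⟩

theorem sub (hf : HasDerivs₂On f f' f'' s) (hg : HasDerivs₂On g g' g'' s) :
    HasDerivs₂On (fun z => f z - g z) (fun z => f' z - g' z) (fun z => f'' z - g'' z) s :=
  fun z hz => ⟨(hf z hz).1.sub (hg z hz).1, (hf z hz).2.sub (hg z hz).2⟩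

theorem comp_add_const {a b : ℝ} (hf : HasDerivs₂On f f' f'' (Ioi b)) :
    HasDerivs₂On (fun z => f (z + a)) (fun z => f' (z + a)) (fun z => f'' (z + a))
      (Ioi (b - a)) := by
  intro z hz
  have hza : z + a ∈ Ioi b := mem_Ioi.2 (sub_lt_iff_lt_add.1 hz)
  exact ⟨(hf _ hza).1.comp_add_const z a, (hf _ hza).2.comp_add_const z a⟩

end HasDerivs₂On

theorem hasDerivs₂On_of_contDiffOn_isOpen {f : ℝ → ℝ} {s : Set ℝ} (hs : IsOpen s)
    (hf : ContDiffOn ℝ 2 f s) : HasDerivs₂On f (deriv f) (deriv (deriv f)) s := by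
  have hf' : ContDiffOn ℝ 1 (deriv f) s := hf.deriv_of_isOpen hs (by norm_num)
  exact fun z hz =>
    ⟨((hf.differentiableOn (by norm_num)).differentiableAt (hs.mem_nhds hz)).hasDerivAt,
      ((hf'.differentiableOn (by norm_num)).differentiableAt (hs.mem_nhds hz)).hasDerivAt⟩

theorem hasDerivs₂On_derivWithin_Ici {f : ℝ → ℝ} {a : ℝ} (hf : ContDiffOn ℝ 2 f (Ici a)) :
    HasDerivs₂On f (derivWithin f (Ici a)) (derivWithin (derivWithin f (Ici a)) (Ici a))
      (Ioi a) := by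
  have hf' : ContDiffOn ℝ 1 (derivWithin f (Ici a)) (Ici a) :=
    hf.derivWithin (uniqueDiffOn_Ici a) (by norm_num)
  exact fun z hz =>
    ⟨(hf.differentiableOn (by norm_num) z (mem_Ici_of_Ioi hz)).hasDerivWithinAt.hasDerivAt
        (Ici_mem_nhds hz),
      (hf'.differentiableOn (by norm_num) z (mem_Ici_of_Ioi hz)).hasDerivWithinAt.hasDerivAt
        (Ici_mem_nhds hz)⟩

theorem hasDerivs₂On_rpow_neg (c : ℝ) :
    HasDerivs₂On (fun z => z ^ (-c)) (fun z => -c * z ^ (-c) / z)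
      (fun z => c * (c + 1) * z ^ (-c) / z ^ 2) (Ioi 0) := by
  intro z hz
  have hz₀ : z ≠ 0 := (mem_Ioi.1 hz).ne'
  have hd : HasDerivAt (fun z : ℝ => z ^ (-c)) (-c * z ^ (-c) / z) z := by
    simpa only [Real.rpow_sub_one hz₀, mul_div_assoc] using
      Real.hasDerivAt_rpow_const (p := -c) (Or.inl hz₀)
  refine ⟨hd, ((hd.const_mul (-c)).fun_div (hasDerivAt_id' z) hz₀).congr_deriv ?_⟩
  field_simp
  ring

/-- Maximum principle on a half-line: at an interior positive maximum of `f - g` the hypothesis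
forces `(f - g)'' > 0`. -/
theorem le_of_deriv_deriv_lt_where_lt {f f' f'' g g' g'' : ℝ → ℝ} {a : ℝ}
    (hfc : ContinuousOn f (Ici a)) (hgc : ContinuousOn g (Ici a))
    (hf : HasDerivs₂On f f' f'' (Ioi a)) (hg : HasDerivs₂On g g' g'' (Ioi a))
    (ha : f a ≤ g a) (hlim : Tendsto (fun z => f z - g z) atTop (𝓝 0))
    (hlt : ∀ z > a, g z < f z → g'' z < f'' z) : ∀ z ≥ a, f z ≤ g z := by
  intro z hz
  by_contra! hcon
  obtain ⟨Z, hZ⟩ := eventually_atTop.1 (hlim.eventually_lt_const (sub_pos.2 hcon))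
  have hzb : z + 1 ≤ max Z (z + 1) := le_max_right _ _
  obtain ⟨m, hm, hmax⟩ := isCompact_Icc.exists_isMaxOn (s := Icc a (max Z (z + 1)))
    ⟨z, hz, by linarith⟩ ((hfc.sub hgc).mono Icc_subset_Ici_self)
  have hzm : f z - g z ≤ f m - g m := hmax ⟨hz, by linarith⟩
  have ham : a < m := lt_of_le_of_ne hm.1 (by rintro rfl; linarith)
  have hmb : m < max Z (z + 1) := by
    refine lt_of_le_of_ne hm.2 fun h => ?_
    have := hZ m (h ▸ le_max_left _ _)
    linarith
  have hloc : IsLocalMax (fun y => f y - g y) m := hmax.isLocalMax (Icc_mem_nhds ham hmb)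
  have hfg := hf.sub hg
  have hnonpos := deriv_deriv_nonpos_of_isLocalMax
    ((lt_mem_nhds ham).mono fun y hy => (hfg y hy).1) (hfg m ham).2 hloc
  have := hlt m ham (by linarith)
  linarith

theorem deriv_le_of_deriv_deriv_le {f f' f'' g g' g'' : ℝ → ℝ} {a : ℝ}
    (hf : HasDerivs₂On f f' f'' (Ici a)) (hg : HasDerivs₂On g g' g'' (Ici a))
    (hlim : Tendsto (fun z => f z - g z) atTop (𝓝 0)) (hle : ∀ z ≥ a, f'' z ≤ g'' z) :
    ∀ z ≥ a, g' z ≤ f' z := by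
  intro z hz
  by_contra! hcon
  have hfg := hf.sub hg
  have hanti : AntitoneOn (fun y => f' y - g' y) (Ici a) := by
    refine antitoneOn_of_hasDerivWithinAt_nonpos (f' := fun y => f'' y - g'' y) (convex_Ici a)
      (fun y hy => (hfg y hy).2.continuousAt.continuousWithinAt)
      (fun y hy => (hfg y (interior_subset hy)).2.hasDerivWithinAt)
      fun y hy => sub_nonpos.2 (hle y (interior_subset hy))
  -- by concavity, `f - g` lies below its tangent at `z`, which has negative slope
  have htangent : ∀ y ≥ z, f y - g y ≤ (f z - g z) + (f' z - g' z) * (y - z) := by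
    intro y hy
    have hsub : Icc z y ⊆ Ici a := Icc_subset_Ici_self.trans (Ici_subset_Ici.2 hz)
    have := (convex_Icc z y).image_sub_le_mul_sub_of_deriv_le (C := f' z - g' z)
      (hfg.continuousOn.mono hsub)
      (fun x hx => (hfg x (hsub (interior_subset hx))).1.differentiableAt.differentiableWithinAt)
      (fun x hx => by
        have hx' := interior_subset hx
        rw [(hfg x (hsub hx')).1.deriv]
        exact hanti hz (hsub hx') hx'.1)
      z (left_mem_Icc.2 hy) y (right_mem_Icc.2 hy) hy
    linarith
  have hbot : Tendsto (fun y => (f z - g z) + (f' z - g' z) * (y - z)) atTop atBot :=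
    tendsto_atBot_add_const_left _ _ <|
      (tendsto_atTop_add_const_right _ (-z) tendsto_id).const_mul_atTop_of_neg (sub_neg.2 hcon)
  exact not_tendsto_nhds_of_tendsto_atBot
    (tendsto_atBot_mono' _ ((eventually_ge_atTop z).mono htangent) hbot) _ hlim

theorem not_isLocalMax_sub_mul_of_superlinear {μ μ' μ'' v v' v'' : ℝ → ℝ} {s : Set ℝ}
    {m k p q ρ : ℝ} {n : ℕ} (hn : 1 < n) (hs : s ∈ 𝓝 m) (hμ : HasDerivs₂On μ μ' μ'' s)
    (hv : HasDerivs₂On v v' v'' s) (hμm : 0 < μ m) (hk : 0 < k) (hρ : 1 < ρ) (hvm : v m = ρ * μ m)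
    (hsuper : μ'' m + p * μ' m + q * μ m ≤ k * μ m ^ n)
    (hsub : k * v m ^ n ≤ v'' m + p * v' m + q * v m) :
    ¬IsLocalMax (fun x => v x - ρ * μ x) m := by
  intro hmax
  have hderivs := hv.sub (hμ.const_mul ρ)
  have hms : m ∈ s := mem_of_mem_nhds hs
  have hfirst : v' m - ρ * μ' m = 0 := hmax.hasDerivAt_eq_zero (hderivs m hms).1
  have hsecond : v'' m - ρ * μ'' m ≤ 0 := deriv_deriv_nonpos_of_isLocalMax
    (mem_of_superset hs fun x hx => (hderivs x hx).1) (hderivs m hms).2 hmax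
  have hstrict : ρ * (k * μ m ^ n) < k * v m ^ n := by
    have : ρ < ρ ^ n := lt_self_pow₀ hρ hn
    have : 0 < k * μ m ^ n := mul_pos hk (pow_pos hμm n)
    rw [hvm, mul_pow]
    nlinarith
  have := mul_le_mul_of_nonneg_left hsuper (zero_le_one.trans hρ.le)
  rw [sub_eq_zero.1 hfirst] at hsub
  rw [hvm] at hsub hstrict
  linarith

/-- A subsolution `v` that overtakes a supersolution `μ` would touch some multiple `ρ * μ`, `ρ > 1`,
from below; since `ρ ^ n > ρ`, that multiple is a strict supersolution. -/
theorem le_of_superlinear_subsolution {μ μ' μ'' v v' v'' k p q : ℝ → ℝ} {a b : ℝ} {n : ℕ}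
    (hn : 1 < n) (hμ : HasDerivs₂On μ μ' μ'' (Ioc a b)) (hv : HasDerivs₂On v v' v'' (Ioc a b))
    (hμpos : ∀ y ∈ Ioc a b, 0 < μ y) (hk : ∀ y ∈ Ioo a b, 0 < k y)
    (hsuper : ∀ y ∈ Ioo a b, μ'' y + p y * μ' y + q y * μ y ≤ k y * μ y ^ n)
    (hsub : ∀ y ∈ Ioo a b, k y * v y ^ n ≤ v'' y + p y * v' y + q y * v y)
    (ha : ∀ ρ > 1, ∀ᶠ y in 𝓝[>] a, v y < ρ * μ y) (hb : v b ≤ μ b) :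
    ∀ y ∈ Ioc a b, v y ≤ μ y := by
  intro y hy
  by_contra! hcon
  have hratio : 1 < v y / μ y := (one_lt_div (hμpos y hy)).2 hcon
  obtain ⟨c, hc, hac, hcy⟩ := ((ha _ hratio).and (Ioo_mem_nhdsGT hy.1)).exists
  have hsubset : Icc c b ⊆ Ioc a b := fun x hx => ⟨hac.trans_le hx.1, hx.2⟩
  obtain ⟨m, hm, hmax⟩ := isCompact_Icc.exists_isMaxOn ⟨y, hcy.le, hy.2⟩
    ((hv.mono hsubset).continuousOn.div (hμ.mono hsubset).continuousOn
      fun x hx => (hμpos x (hsubset hx)).ne')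
  have hym : v y / μ y ≤ v m / μ m := hmax ⟨hcy.le, hy.2⟩
  have hμm : 0 < μ m := hμpos m (hsubset hm)
  have hcm : c < m := by
    refine lt_of_le_of_ne hm.1 ?_
    rintro rfl
    exact (hym.trans_lt ((div_lt_iff₀ hμm).2 hc)).false
  have hmb : m < b := by
    refine lt_of_le_of_ne hm.2 ?_
    rintro rfl
    exact (hratio.trans_le (hym.trans ((div_le_one hμm).2 hb))).false
  have hmo : m ∈ Ioo a b := ⟨hac.trans hcm, hmb⟩
  refine not_isLocalMax_sub_mul_of_superlinear hn (Ioc_mem_nhds hmo.1 hmo.2) hμ hv hμm (hk m hmo)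
    (hratio.trans_le hym) (div_mul_cancel₀ _ hμm.ne').symm (hsuper m hmo) (hsub m hmo) ?_
  filter_upwards [Icc_mem_nhds hcm hmb] with x hx
  have hxm : v x / μ x ≤ v m / μ m := hmax hx
  rw [div_le_iff₀ (hμpos x (hsubset hx))] at hxm
  rwa [div_mul_cancel₀ _ hμm.ne', sub_self, sub_nonpos]

/-! ### Power inequalities -/

theorem pow_mul_sub_le_pow_sub_pow {a b : ℝ} (hb : 0 ≤ b) (hab : b ≤ a) (n : ℕ) :
    n * b ^ (n - 1) * (a - b) ≤ a ^ n - b ^ n := by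
  have := pow_add_mul_le_add_pow hb (b := a - b) (by linarith) n
  rw [add_sub_cancel] at this
  linarith

theorem pow_sub_pow_le_pow_mul_sub {a b : ℝ} (hb : 0 ≤ b) (hab : b ≤ a) (n : ℕ) :
    a ^ n - b ^ n ≤ n * a ^ (n - 1) * (a - b) := by
  have := (le_abs_self _).trans (abs_pow_sub_pow_le a b n)
  rw [abs_of_nonneg (sub_nonneg.2 hab), abs_of_nonneg (hb.trans hab), abs_of_nonneg hb,
    max_eq_left hab] at this
  linarith

theorem one_add_pow_le_one_add_mul {x X : ℝ} (hx : 0 ≤ x) (hxX : x ≤ X) (n : ℕ) :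
    (1 + x) ^ n ≤ 1 + n * (1 + X) ^ (n - 1) * x := by
  have h := pow_sub_pow_le_pow_mul_sub zero_le_one (le_add_of_nonneg_right hx) n
  rw [one_pow, add_sub_cancel_left, sub_le_iff_le_add'] at h
  exact h.trans (by gcongr)

/-! ### Inequalities up to a power tail -/

/-- `f ≤ g + O(z ^ (-p))` as `z → ∞`, a one-sided version of `f - g = O(z ^ (-p))`. -/
def LEUpTo (p : ℝ) (f g : ℝ → ℝ) : Prop :=
  ∃ C, 0 ≤ C ∧ ∀ᶠ z in atTop, f z ≤ g z + C * z ^ (-p)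

theorem LEUpTo.of_exponent_le {p s : ℝ} {f g : ℝ → ℝ} (h : LEUpTo s f g) (hps : p ≤ s) :
    LEUpTo p f g := by
  obtain ⟨C, hC, h⟩ := h
  refine ⟨C, hC, ?_⟩
  filter_upwards [h, eventually_ge_atTop 1] with z hz hz₁
  exact hz.trans (by gcongr)

/-! ### Subsolutions of perturbed Euler equations -/

theorem exists_euler_barrier {M p s : ℝ} (b : ℝ) (hp : 0 < p) (hps : p ≤ s) (hsp : s < p + 1)
    (hpM : p * (p + 1) ≤ M) (hstrict : p < s ∨ p * (p + 1) < M) :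
    ∃ c > 0, ∀ᶠ z : ℝ in atTop,
      p * (p + 1) * z ^ (-p) / z ^ 2 - 1 / 2 * (s * (s + 1) * z ^ (-s) / z ^ 2)
          + c * z ^ (-s) / z ^ 2
        ≤ M / z ^ 2 * (1 - b / z) * (z ^ (-p) - 1 / 2 * z ^ (-s)) := by
  have hM : 0 ≤ M := by nlinarith
  have hps' : p * (p + 1) ≤ s * (s + 1) := by nlinarith
  obtain ⟨c, hc, hgap⟩ : ∃ c > 0, 4 * c = (M - p * (p + 1)) + (s * (s + 1) - p * (p + 1)) := by
    refine ⟨((M - p * (p + 1)) + (s * (s + 1) - p * (p + 1))) / 4, ?_, by ring⟩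
    rcases hstrict with h | h <;> nlinarith
  refine ⟨c, hc, ?_⟩
  have hlim : Tendsto (fun z : ℝ => M * |b| * z ^ (-(p + 1 - s))) atTop (𝓝 0) := by
    simpa using (tendsto_rpow_neg_atTop (by linarith : 0 < p + 1 - s)).const_mul (M * |b|)
  filter_upwards [hlim.eventually_le_const hc, eventually_ge_atTop 1] with z hsmall hz
  have hz₀ : 0 < z := by linarith
  have hs₀ : 0 < z ^ (-s) := Real.rpow_pos_of_pos hz₀ _
  have hmono : z ^ (-s) ≤ z ^ (-p) := Real.rpow_le_rpow_of_exponent_le hz (by linarith)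
  have hpert : M * b / z * (z ^ (-p) - 1 / 2 * z ^ (-s)) ≤ c * z ^ (-s) := by
    calc M * b / z * (z ^ (-p) - 1 / 2 * z ^ (-s)) ≤ M * |b| / z * z ^ (-p) := by
          gcongr
          · linarith
          · exact le_abs_self b
          · linarith
      _ = M * |b| * z ^ (-(p + 1 - s)) * z ^ (-s) := by
          rw [mul_assoc (M * |b|), ← Real.rpow_add hz₀,
            show -(p + 1 - s) + -s = -p - 1 by ring, Real.rpow_sub_one hz₀.ne']
          ring
      _ ≤ c * z ^ (-s) := by gcongr
  have hexcess : (M - p * (p + 1)) * z ^ (-s) ≤ (M - p * (p + 1)) * z ^ (-p) :=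
    mul_le_mul_of_nonneg_left hmono (by linarith)
  have hscaled : p * (p + 1) * z ^ (-p) - 1 / 2 * (s * (s + 1) * z ^ (-s)) + c * z ^ (-s)
      ≤ (M - M * b / z) * (z ^ (-p) - 1 / 2 * z ^ (-s)) := by
    linear_combination hpert + hexcess + 1 / 2 * z ^ (-s) * hgap.le
  calc _ = (p * (p + 1) * z ^ (-p) - 1 / 2 * (s * (s + 1) * z ^ (-s)) + c * z ^ (-s)) / z ^ 2 := by
        ring
    _ ≤ (M - M * b / z) * (z ^ (-p) - 1 / 2 * z ^ (-s)) / z ^ 2 := by gcongr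
    _ = _ := by ring

theorem rpow_neg_sub_half_rpow_neg_pos {p s z : ℝ} (hz : 1 ≤ z) (hps : p ≤ s) :
    0 < z ^ (-p) - 1 / 2 * z ^ (-s) := by
  have : z ^ (-s) ≤ z ^ (-p) := Real.rpow_le_rpow_of_exponent_le hz (by linarith)
  have : 0 < z ^ (-p) := Real.rpow_pos_of_pos (by linarith) _
  linarith

theorem tendsto_rpow_neg_sub_half_rpow_neg_atTop {p s : ℝ} (hp : 0 < p) (hs : 0 < s) :
    Tendsto (fun z : ℝ => z ^ (-p) - 1 / 2 * z ^ (-s)) atTop (𝓝 0) := by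
  simpa only [mul_zero, sub_zero] using
    (tendsto_rpow_neg_atTop hp).sub ((tendsto_rpow_neg_atTop hs).const_mul (1 / 2))

/-- The decaying solution `z ^ (-r)`, `r * (r + 1) = M`, of the Euler equation `w'' = M / z ^ 2 * w`
sets the decay rate, unless the source `z ^ (-s) / z ^ 2` decays more slowly. -/
theorem leUpTo_zero_of_euler_subsolution {w w' w'' : ℝ → ℝ} {M b C p s : ℝ}
    (hw : HasDerivs₂On w w' w'' (Ioi 0)) (hlim : Tendsto w atTop (𝓝 0))
    (hsub : ∀ᶠ z in atTop, 0 < w z → M / z ^ 2 * (1 - b / z) * w z - C * z ^ (-s) / z ^ 2 ≤ w'' z)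
    (hp : 0 < p) (hps : p ≤ s) (hsp : s < p + 1) (hpM : p * (p + 1) ≤ M)
    (hstrict : p < s ∨ p * (p + 1) < M) : LEUpTo p w fun _ => 0 := by
  obtain ⟨c, hc, hbarrier⟩ := exists_euler_barrier b hp hps hsp hpM hstrict
  obtain ⟨z₁, hz₁⟩ := eventually_atTop.1
    ((hbarrier.and hsub).and (eventually_ge_atTop (max 1 b)))
  set B : ℝ → ℝ := fun z => z ^ (-p) - 1 / 2 * z ^ (-s)
  have hone : ∀ z ≥ z₁, 1 ≤ z := fun z hz => (le_max_left _ _).trans (hz₁ z hz).2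
  have hbz : ∀ z ≥ z₁, b ≤ z := fun z hz => (le_max_right _ _).trans (hz₁ z hz).2
  have hBpos : ∀ z ≥ z₁, 0 < B z := fun z hz => rpow_neg_sub_half_rpow_neg_pos (hone z hz) hps
  have hBderivs := (hasDerivs₂On_rpow_neg p).sub ((hasDerivs₂On_rpow_neg s).const_mul (1 / 2))
  have hBlim : Tendsto B atTop (𝓝 0) :=
    tendsto_rpow_neg_sub_half_rpow_neg_atTop hp (hp.trans_le hps)
  set K := max (|C| / c + 1) (w z₁ / B z₁)
  have hCK : C < K * c := by
    have h₁ : |C| / c < K := (lt_add_one _).trans_le (le_max_left _ _)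
    exact (le_abs_self C).trans_lt ((div_lt_iff₀ hc).1 h₁)
  have hK : 0 < K := lt_of_lt_of_le (by positivity) (le_max_left _ _)
  have hIci : Ici z₁ ⊆ Ioi 0 := fun z hz => zero_lt_one.trans_le (hone z hz)
  have hle := le_of_deriv_deriv_lt_where_lt (hw.continuousOn.mono hIci)
    ((hBderivs.const_mul K).continuousOn.mono hIci) (hw.mono (Ioi_subset_Ici_self.trans hIci))
    ((hBderivs.const_mul K).mono (Ioi_subset_Ici_self.trans hIci))
    ((div_le_iff₀ (hBpos z₁ le_rfl)).1 (le_max_right _ _))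
    (by simpa only [mul_zero, sub_zero] using hlim.sub (hBlim.const_mul K)) fun z hz hlt => ?_
  · refine ⟨K, hK.le, eventually_atTop.2 ⟨z₁, fun z hz => (hle z hz).trans ?_⟩⟩
    have : 0 < z ^ (-s) := Real.rpow_pos_of_pos (hIci hz) _
    rw [zero_add]
    gcongr
    linarith
  · have hz₀ : 0 < z := hIci (le_of_lt hz)
    have hKB : 0 < K * B z := mul_pos hK (hBpos z hz.le)
    have hcoef : 0 ≤ M / z ^ 2 * (1 - b / z) :=
      mul_nonneg (div_nonneg (by nlinarith) (by positivity))
        (sub_nonneg.2 ((div_le_one hz₀).2 (hbz z hz.le)))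
    obtain ⟨⟨hbarrier, hsub⟩, -⟩ := hz₁ z hz.le
    have hsource : C * z ^ (-s) / z ^ 2 < K * (c * z ^ (-s) / z ^ 2) := by
      rw [show K * (c * z ^ (-s) / z ^ 2) = K * c * z ^ (-s) / z ^ 2 by ring]
      gcongr
    have := hsub (hKB.trans hlt)
    have := mul_le_mul_of_nonneg_left hlt.le hcoef
    have := mul_le_mul_of_nonneg_left hbarrier hK.le
    linarith

/-! ### The exponents and the power tail -/

theorem kap_pos : 0 < kap := by
  unfold kap
  positivity

theorem gam_pos (n : ℕ) : 0 < gam n := by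
  unfold gam
  positivity

theorem alph_add_gam (n : ℕ) : alph n + gam n = 1 / 2 :=
  sub_add_cancel _ _

section Parameters

variable {n : ℕ}

theorem one_lt_cast (hn : 2 ≤ n) : (1 : ℝ) < n := by
  exact_mod_cast hn

theorem del_mul_cast_sub_one (hn : 2 ≤ n) : del n * ((n : ℝ) - 1) = n + 2 :=
  div_mul_cancel₀ _ (sub_pos.2 (one_lt_cast hn)).ne'

theorem one_lt_del (hn : 2 ≤ n) : 1 < del n :=
  (one_lt_div (sub_pos.2 (one_lt_cast hn))).2 (by linarith)

theorem del_pos (hn : 2 ≤ n) : 0 < del n :=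
  zero_lt_one.trans (one_lt_del hn)

theorem del_le_two (hn : 4 ≤ n) : del n ≤ 2 := by
  have : (4 : ℝ) ≤ n := by exact_mod_cast hn
  rw [del, div_le_iff₀ (by linarith)]
  linarith

theorem eps_eq_gam_mul (hn : 2 ≤ n) : eps n = gam n * (1 + del n) := by
  have := sub_pos.2 (one_lt_cast hn)
  unfold eps gam del
  field_simp
  ring

theorem lam_pos (hn : 2 ≤ n) : 0 < lam n := by
  have := del_pos hn
  have := kap_pos
  unfold lam
  positivity

theorem lam_pow (hn : 2 ≤ n) : (2 * kap) ^ n * lam n ^ (n - 1) = del n * (del n + 1) := by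
  have hδ := del_pos hn
  have hκ := kap_pos
  have hcast : ((n - 1 : ℕ) : ℝ) = n - 1 := by
    rw [Nat.cast_sub (by omega), Nat.cast_one]
  rw [lam, one_div, ← hcast, Real.rpow_inv_natCast_pow (by positivity) (by omega),
    mul_div_cancel₀ _ (by positivity)]

theorem lam0_nonneg (hn : 2 ≤ n) : 0 ≤ lam0 n := by
  have hδ := one_lt_del hn
  have hκ := kap_pos
  have hlam := lam_pos hn
  have hn₁ := one_lt_cast hn
  have hε : eps n = (del n - 1) / 3 := by
    unfold eps del
    field_simp [(sub_pos.2 hn₁).ne']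
    ring
  have hbracket : 0 ≤ n * del n * (del n + 1) / 6 - (del n - 2 * eps n) := by
    have := del_mul_cast_sub_one hn
    rw [hε]
    nlinarith
  have hnum : -2 * (n : ℝ) * kap3 * del n * (del n + 1) - kap * (del n - 2 * eps n)
      = kap * (n * del n * (del n + 1) / 6 - (del n - 2 * eps n)) := by
    unfold kap3
    ring
  have : 0 < 2 * del n - 1 := by linarith
  have : 0 < (n : ℝ) - 1 := sub_pos.2 hn₁
  rw [lam0, hnum]
  positivity

theorem lam0_mul (hn : 2 ≤ n) :
    lam0 n * (n * (del n * (del n + 1)) - (2 - del n) * (1 - del n))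
      = -2 * n * kap3 * (del n * (del n + 1)) * (lam n / (2 * kap))
        + lam n * (gam n - alph n * del n) := by
  have hδ := one_lt_del hn
  have hκ := kap_pos
  have hdenom : 0 < ((n : ℝ) - 1) * del n * (del n + 1) + 2 * (2 * del n - 1) := by
    have : 0 < 2 * del n - 1 := by linarith
    have : 0 < (n : ℝ) - 1 := sub_pos.2 (one_lt_cast hn)
    positivity
  rw [show n * (del n * (del n + 1)) - (2 - del n) * (1 - del n)
    = ((n : ℝ) - 1) * del n * (del n + 1) + 2 * (2 * del n - 1) by ring, lam0,
    div_mul_cancel₀ _ hdenom.ne', eps_eq_gam_mul hn, alph]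
  field_simp
  ring

/-- The coefficient `n * δ * (δ + 1)` of the Euler equation `w'' = M / z ^ 2 * w` obtained by
linearising `g'' = (2 * κ * z * g) ^ n` at its power solution `λ * z ^ (-δ)`. -/
noncomputable def eulerCoeff (n : ℕ) : ℝ := n * (del n * (del n + 1))

theorem eulerCoeff_pos (hn : 2 ≤ n) : 0 < eulerCoeff n := by
  have := del_pos hn
  unfold eulerCoeff
  positivity

theorem delp_of_le_five (hn : n ≤ 5) : delp n = (√(4 * eulerCoeff n + 1) - 1) / 2 := by
  rw [delp, if_pos hn, eulerCoeff]
  ring_nf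

theorem delp_mul_succ_of_le_five (hn : 2 ≤ n) (hn₅ : n ≤ 5) :
    delp n * (delp n + 1) = eulerCoeff n := by
  have := Real.sq_sqrt (by linarith [eulerCoeff_pos hn] : 0 ≤ 4 * eulerCoeff n + 1)
  rw [delp_of_le_five hn₅]
  linarith

theorem delp_nonneg (hn : 2 ≤ n) : 0 ≤ delp n := by
  rcases le_or_gt n 5 with h | h
  · have : 1 ≤ √(4 * eulerCoeff n + 1) := Real.one_le_sqrt.2 (by linarith [eulerCoeff_pos hn])
    rw [delp_of_le_five h]
    linarith
  · rw [delp, if_neg h.not_ge]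
    linarith [del_pos hn]

theorem delp_lt_of_le_five (hn : 2 ≤ n) (hn₅ : n ≤ 5) : delp n < 2 * del n + 1 := by
  have hδ := del_pos hn
  have hgap : (n : ℝ) < 3 * del n := by
    have : (n : ℝ) ≤ 5 := by exact_mod_cast hn₅
    have := one_lt_cast hn
    rw [del, ← mul_div_assoc, lt_div_iff₀ (by linarith)]
    nlinarith
  have := del_mul_cast_sub_one hn
  have hlt : delp n * (delp n + 1) < (2 * del n + 1) * (2 * del n + 1 + 1) := by
    rw [delp_mul_succ_of_le_five hn hn₅, eulerCoeff]
    nlinarith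
  nlinarith [delp_nonneg hn]

theorem delp_mul_succ_lt_of_five_lt (hn : 5 < n) : delp n * (delp n + 1) < eulerCoeff n := by
  have hδ := del_pos (by omega : 2 ≤ n)
  have hgap : 3 * del n < n := by
    have : (6 : ℝ) ≤ n := by exact_mod_cast hn
    rw [del, ← mul_div_assoc, div_lt_iff₀ (by linarith)]
    nlinarith
  have := del_mul_cast_sub_one (by omega : 2 ≤ n)
  rw [delp, if_neg hn.not_ge, eulerCoeff]
  nlinarith

theorem delp_le (hn : 2 ≤ n) : delp n ≤ 2 * del n + 1 := by
  rcases le_or_gt n 5 with h | h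
  · exact (delp_lt_of_le_five hn h).le
  · rw [delp, if_neg h.not_ge]

theorem delp_mul_succ_le (hn : 2 ≤ n) : delp n * (delp n + 1) ≤ eulerCoeff n :=
  (le_or_gt n 5).elim (fun h => (delp_mul_succ_of_le_five hn h).le)
    fun h => (delp_mul_succ_lt_of_five_lt h).le

theorem two_mul_del_lt_delp (hn : 4 ≤ n) : 2 * del n < delp n := by
  have hn₂ : 2 ≤ n := by omega
  have hδ := del_pos hn₂
  rcases le_or_gt n 5 with h | h
  · have : (4 : ℝ) ≤ n := by exact_mod_cast hn
    have := del_mul_cast_sub_one hn₂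
    have := del_le_two hn
    have hlt : 2 * del n * (2 * del n + 1) < delp n * (delp n + 1) := by
      rw [delp_mul_succ_of_le_five hn₂ h, eulerCoeff]
      nlinarith
    nlinarith [delp_nonneg hn₂]
  · rw [delp, if_neg h.not_ge]
    linarith

/-- The power solution `λ * z ^ (-δ)` of `g'' = (2 * κ * z * g) ^ n`. -/
noncomputable def powerTail (n : ℕ) (z : ℝ) : ℝ := lam n * z ^ (-del n)

theorem powerTail_pos (hn : 2 ≤ n) {z : ℝ} (hz : 0 < z) : 0 < powerTail n z :=
  mul_pos (lam_pos hn) (Real.rpow_pos_of_pos hz _)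

theorem hasDerivs₂On_powerTail (n : ℕ) : HasDerivs₂On (powerTail n)
    (fun z => -del n * powerTail n z / z) (fun z => del n * (del n + 1) * powerTail n z / z ^ 2)
    (Ioi 0) := by
  convert (hasDerivs₂On_rpow_neg (del n)).const_mul (lam n) using 2 <;> rw [powerTail] <;> ring

theorem powerTail_le_of_le (hn : 2 ≤ n) {y z : ℝ} (hy : 0 < y) (hyz : y ≤ z) :
    powerTail n z ≤ powerTail n y :=
  mul_le_mul_of_nonneg_left
    (Real.rpow_le_rpow_of_nonpos hy hyz (neg_nonpos.2 (del_pos hn).le)) (lam_pos hn).le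

theorem powerTail_le_lam (hn : 2 ≤ n) {z : ℝ} (hz : 1 ≤ z) : powerTail n z ≤ lam n := by
  simpa only [powerTail, Real.one_rpow, mul_one] using powerTail_le_of_le hn zero_lt_one hz

theorem rpow_neg_mul_powerTail_div (n : ℕ) {z : ℝ} (hz : 0 < z) :
    z ^ (-del n) * powerTail n z / z = lam n * z ^ (-(2 * del n + 1)) := by
  rw [show -(2 * del n + 1) = -del n + -del n - 1 by ring, Real.rpow_sub_one hz.ne',
    Real.rpow_add hz, powerTail]
  ring

theorem rpow_neg_mul_powerTail_comp_div (n : ℕ) {T z : ℝ} (hT : 0 < T) (hz : 0 ≤ z) :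
    T ^ (-del n) * powerTail n (z / T) = powerTail n z := by
  have := (Real.rpow_pos_of_pos hT (-del n)).ne'
  rw [powerTail, powerTail, Real.div_rpow hz hT.le]
  field_simp

theorem tendsto_powerTail (hn : 2 ≤ n) : Tendsto (powerTail n) atTop (𝓝 0) := by
  have := (tendsto_rpow_neg_atTop (del_pos hn)).const_mul (lam n)
  rwa [mul_zero] at this

theorem mul_pow_mul_powerTail_pow (hn : 2 ≤ n) {z : ℝ} (hz : 0 < z) :
    (2 * kap * z) ^ n * powerTail n z ^ (n - 1) = del n * (del n + 1) / z ^ 2 := by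
  have hexp : -del n * ((n - 1 : ℕ) : ℝ) = -((n + 2 : ℕ) : ℝ) := by
    have := del_mul_cast_sub_one hn
    rw [Nat.cast_sub (by omega)]
    push_cast
    linarith
  have htail : (z ^ (-del n)) ^ (n - 1) = (z ^ (n + 2))⁻¹ := by
    rw [← Real.rpow_mul_natCast hz.le, hexp, Real.rpow_neg hz.le, Real.rpow_natCast]
  rw [powerTail, mul_pow (2 * kap) z, mul_pow (lam n), htail, ← lam_pow hn, pow_add]
  field_simp

theorem mul_powerTail_pow (hn : 2 ≤ n) {z : ℝ} (hz : 0 < z) :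
    (2 * kap * z * powerTail n z) ^ n = del n * (del n + 1) * powerTail n z / z ^ 2 := by
  rw [mul_pow, ← Nat.sub_add_cancel (one_le_two.trans hn), pow_succ (powerTail _ z), ← mul_assoc,
    Nat.sub_add_cancel (one_le_two.trans hn), mul_pow_mul_powerTail_pow hn hz]
  ring

end Parameters

/-! ### The reactive profile -/

/-- The quantity `2 * κ * z * η + η ^ 2`, whose `n`-th power drives the reactive profile `η`. -/
noncomputable def reactant (η : ℝ → ℝ) (z : ℝ) : ℝ := 2 * kap * z * η z + η z ^ 2

/-- A positive decaying solution `η`, with derivative `η'`, of the profile equation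
`η'' = (2 * κ * z * η + η ^ 2) ^ n` on the half-line. -/
structure IsReactiveSolution (n : ℕ) (η η' : ℝ → ℝ) : Prop where
  continuousOn : ContinuousOn η (Ici 0)
  pos : ∀ z ≥ 0, 0 < η z
  hasDerivs₂On : HasDerivs₂On η η' (fun z => reactant η z ^ n) (Ioi 0)
  tendsto_zero : Tendsto η atTop (𝓝 0)

namespace IsReactiveSolution

variable {n : ℕ} {η η' : ℝ → ℝ}

theorem mul_lt_reactant (hη : IsReactiveSolution n η η') {z : ℝ} (hz : 0 ≤ z) :
    2 * kap * z * η z < reactant η z :=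
  lt_add_of_pos_right _ (pow_pos (hη.pos z hz) 2)

theorem eventually_le_powerTail_zero (hη : IsReactiveSolution n η η') (hn : 2 ≤ n) :
    ∀ᶠ y in 𝓝[>] 0, η y ≤ powerTail n y := by
  have hbdd : ∀ᶠ y in 𝓝[>] 0, η y < η 0 + 1 :=
    ((hη.continuousOn 0 self_mem_Ici).mono Ioi_subset_Ici_self).eventually_lt_const
      (lt_add_one _)
  have hblowup : ∀ᶠ y : ℝ in 𝓝[>] 0, (η 0 + 1) / lam n ≤ y ^ (-del n) :=
    (tendsto_rpow_neg_nhdsGT_zero (neg_lt_zero.2 (del_pos hn))).eventually_ge_atTop _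
  filter_upwards [hbdd, hblowup] with y hy₁ hy₂
  exact hy₁.le.trans ((div_le_iff₀' (lam_pos hn)).1 hy₂)

theorem le_powerTail (hη : IsReactiveSolution n η η') (hn : 2 ≤ n) {z : ℝ} (hz : 0 < z) :
    η z ≤ powerTail n z := by
  obtain ⟨a, hale, ha, haz⟩ := ((hη.eventually_le_powerTail_zero hn).and (Ioo_mem_nhdsGT hz)).exists
  have hIci : Ici a ⊆ Ioi 0 := fun y hy => lt_of_lt_of_le ha hy
  have hIoi : Ioi a ⊆ Ioi 0 := Ioi_subset_Ici_self.trans hIci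
  refine le_of_deriv_deriv_lt_where_lt (hη.hasDerivs₂On.mono hIci).continuousOn
    ((hasDerivs₂On_powerTail n).mono hIci).continuousOn (hη.hasDerivs₂On.mono hIoi)
    ((hasDerivs₂On_powerTail n).mono hIoi) hale
    (by simpa only [sub_zero] using hη.tendsto_zero.sub (tendsto_powerTail hn))
    (fun y hy hlt => ?_) z haz.le
  have hy₀ : 0 < y := hIoi hy
  have hκ := kap_pos
  have := powerTail_pos hn hy₀
  rw [← mul_powerTail_pow hn hy₀]
  refine pow_lt_pow_left₀ (lt_of_le_of_lt ?_ (hη.mul_lt_reactant hy₀.le)) (by positivity) (by omega)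
  gcongr

/-- For large `a` the translate `powerTail n (· + a)` is a subsolution: the shift costs
`2 * κ * a * η`, which absorbs `η ^ 2`. -/
theorem exists_powerTail_add_le (hη : IsReactiveSolution n η η') (hn : 2 ≤ n) :
    ∃ a > 0, ∀ z ≥ 0, powerTail n (z + a) ≤ η z := by
  have hκ := kap_pos
  have htail := tendsto_powerTail hn
  obtain ⟨a, ⟨hasmall, haη⟩, ha⟩ := (((htail.eventually_le_const (by positivity : 0 < 2 * kap)).and
    (htail.eventually_le_const (hη.pos 0 le_rfl))).and (eventually_ge_atTop 1)).exists
  have hshift := (hasDerivs₂On_powerTail n).comp_add_const (a := a)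
  have hIci : Ici (0 : ℝ) ⊆ Ioi (0 - a) := fun y hy => mem_Ioi.2 (by linarith [mem_Ici.1 hy])
  refine ⟨a, by linarith, le_of_deriv_deriv_lt_where_lt (hshift.mono hIci).continuousOn
    hη.continuousOn (hshift.mono (Ioi_subset_Ici_self.trans hIci)) hη.hasDerivs₂On
    (by rwa [zero_add]) ?_ fun y hy hlt => ?_⟩
  · simpa only [sub_zero, Function.comp_def, id] using
      (htail.comp (tendsto_atTop_add_const_right _ a tendsto_id)).sub hη.tendsto_zero
  · have hηy := hη.pos y (le_of_lt hy)
    have hle : powerTail n (y + a) ≤ 2 * kap :=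
      (powerTail_le_of_le hn (by linarith) (by linarith)).trans hasmall
    rw [← mul_powerTail_pow hn (by linarith)]
    refine pow_lt_pow_left₀ ?_ (by unfold reactant; positivity) (by omega)
    calc reactant η y < 2 * kap * y * powerTail n (y + a) + powerTail n (y + a) ^ 2 := by
          unfold reactant
          gcongr
      _ ≤ 2 * kap * y * powerTail n (y + a) + 2 * kap * a * powerTail n (y + a) := by
          rw [sq]
          gcongr
          · exact hlt.le.trans' hηy.le
          · exact hle.trans (le_mul_of_one_le_right (by positivity) ha)
      _ = 2 * kap * (y + a) * powerTail n (y + a) := by ring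

theorem exists_eulerCoeff_mul_le (hη : IsReactiveSolution n η η') (hn : 2 ≤ n) :
    ∃ b, ∀ z > 0, eulerCoeff n / z ^ 2 * (1 - b / z) ≤ n * ((2 * kap * z) ^ n * η z ^ (n - 1)) := by
  obtain ⟨a, ha, hlow⟩ := hη.exists_powerTail_add_le hn
  refine ⟨(n + 2) * a, fun z hz => ?_⟩
  have hκ := kap_pos
  have hM := eulerCoeff_pos hn
  have hza : 0 < z + a := by positivity
  have htail := (powerTail_pos hn hza).le
  have hbernoulli : 1 - (n + 2) * a / z ≤ (z / (z + a)) ^ (n + 2) := by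
    have h := one_add_mul_le_pow (a := z / (z + a) - 1)
      (by linarith [div_nonneg hz.le hza.le]) (n + 2)
    have : (n + 2) * (a / (z + a)) ≤ (n + 2) * (a / z) := by
      gcongr
      linarith
    rw [add_sub_cancel, show z / (z + a) - 1 = -(a / (z + a)) by field_simp; ring] at h
    push_cast at h
    rw [mul_div_assoc]
    linarith
  calc eulerCoeff n / z ^ 2 * (1 - (n + 2) * a / z)
      ≤ eulerCoeff n / z ^ 2 * (z / (z + a)) ^ (n + 2) := by gcongr
    _ = n * ((z / (z + a)) ^ n * (del n * (del n + 1) / (z + a) ^ 2)) := by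
        rw [eulerCoeff, pow_add (z / (z + a)), div_pow z (z + a) 2]
        field_simp
    _ = n * ((2 * kap * z) ^ n * powerTail n (z + a) ^ (n - 1)) := by
        rw [← mul_pow_mul_powerTail_pow hn hza, ← mul_assoc (_ ^ n) (_ ^ n), ← mul_pow]
        congr 3
        field_simp
    _ ≤ n * ((2 * kap * z) ^ n * η z ^ (n - 1)) := by
        gcongr
        exact hlow z hz.le

theorem exists_reactant_pow_le (hη : IsReactiveSolution n η η') (hn : 2 ≤ n) :
    ∃ C, 0 ≤ C ∧ ∀ z ≥ 1,
      reactant η z ^ n ≤ (2 * kap * z * η z) ^ n + C * z ^ (-(2 * del n + 1)) / z ^ 2 := by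
  have hκ := kap_pos
  have hδ := del_pos hn
  have hlam := lam_pos hn
  set X := lam n / (2 * kap)
  set K : ℝ := n * (1 + X) ^ (n - 1)
  refine ⟨del n * (del n + 1) * lam n * K * X, by positivity, fun z hz => ?_⟩
  have hz₀ : 0 < z := by linarith
  have hηz := hη.pos z hz₀.le
  have hup := hη.le_powerTail hn hz₀
  have htail := powerTail_pos hn hz₀
  set x := η z / (2 * kap * z)
  have hx : x ≤ powerTail n z / (2 * kap * z) :=
    div_le_div_of_nonneg_right hup (by positivity)
  have hxX : x ≤ X := div_le_div₀ hlam.le (hup.trans (powerTail_le_lam hn hz)) (by positivity)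
    (le_mul_of_one_le_right (by positivity) hz)
  have hfactor : reactant η z = 2 * kap * z * η z * (1 + x) := by
    simp only [reactant, x]
    field_simp
  have hlead : (2 * kap * z * η z) ^ n ≤ del n * (del n + 1) * powerTail n z / z ^ 2 := by
    rw [← mul_powerTail_pow hn hz₀]
    gcongr
  calc reactant η z ^ n = (2 * kap * z * η z) ^ n * (1 + x) ^ n := by rw [hfactor, mul_pow]
    _ ≤ (2 * kap * z * η z) ^ n * (1 + K * x) := by
        gcongr
        exact one_add_pow_le_one_add_mul (by positivity) hxX n
    _ = (2 * kap * z * η z) ^ n + (2 * kap * z * η z) ^ n * (K * x) := by ring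
    _ ≤ (2 * kap * z * η z) ^ n + del n * (del n + 1) * powerTail n z / z ^ 2
          * (K * (powerTail n z / (2 * kap * z))) := by gcongr
    _ = (2 * kap * z * η z) ^ n
          + del n * (del n + 1) * K * X * (z ^ (-del n) * powerTail n z / z) / z ^ 2 := by
        simp only [powerTail, X]
        field_simp
    _ = _ := by
        rw [rpow_neg_mul_powerTail_div n hz₀]
        ring

theorem powerTail_leUpTo (hη : IsReactiveSolution n η η') (hn : 4 ≤ n) :
    LEUpTo (delp n) (powerTail n) η := by
  have hn₂ : 2 ≤ n := by omega
  have hκ := kap_pos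
  obtain ⟨b, hcoef⟩ := hη.exists_eulerCoeff_mul_le hn₂
  obtain ⟨C, -, hreact⟩ := hη.exists_reactant_pow_le hn₂
  have hdelp := two_mul_del_lt_delp hn
  suffices h : LEUpTo (delp n) (fun z => powerTail n z - η z) fun _ => 0 by
    obtain ⟨C, hC, h⟩ := h
    refine ⟨C, hC, h.mono fun z hz => ?_⟩
    linarith
  refine leUpTo_zero_of_euler_subsolution (M := eulerCoeff n) (b := b) (C := C)
    ((hasDerivs₂On_powerTail n).sub hη.hasDerivs₂On)
    (by simpa only [sub_zero] using (tendsto_powerTail hn₂).sub hη.tendsto_zero) ?_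
    (by linarith [del_pos hn₂]) (delp_le hn₂) (by linarith) (delp_mul_succ_le hn₂)
    ((le_or_gt n 5).imp (delp_lt_of_le_five hn₂) delp_mul_succ_lt_of_five_lt)
  filter_upwards [eventually_ge_atTop 1] with z hz hw
  have hz₀ : 0 < z := by linarith
  have hpow := pow_mul_sub_le_pow_sub_pow (hη.pos z hz₀.le).le (sub_pos.1 hw).le n
  have hlin := mul_le_mul_of_nonneg_left hpow (by positivity : 0 ≤ (2 * kap * z) ^ n)
  have := mul_le_mul_of_nonneg_right (hcoef z hz₀) hw.le
  have := hreact z hz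
  rw [← mul_powerTail_pow hn₂ hz₀, mul_pow _ (powerTail n z)]
  rw [mul_pow _ (η z)] at this
  linarith

theorem neg_mul_deriv_leUpTo (hη : IsReactiveSolution n η η') (hn : 2 ≤ n) :
    LEUpTo (2 * del n + 1) (fun z => -(z * η' z)) fun z => del n * powerTail n z := by
  obtain ⟨C, hC, hreact⟩ := hη.exists_reactant_pow_le hn
  have hκ := kap_pos
  have hδ := del_pos hn
  set s := 2 * del n + 1
  have hs : 0 < s := by positivity
  set c := C / (s * (s + 1))
  have hIci : Ici (1 : ℝ) ⊆ Ioi 0 := Ici_subset_Ioi.2 zero_lt_one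
  have hslope := deriv_le_of_deriv_deriv_le (hη.hasDerivs₂On.mono hIci)
    (((hasDerivs₂On_powerTail n).add ((hasDerivs₂On_rpow_neg s).const_mul c)).mono hIci)
    (by
      simpa only [mul_zero, add_zero, sub_zero] using hη.tendsto_zero.sub
        ((tendsto_powerTail hn).add ((tendsto_rpow_neg_atTop hs).const_mul c)))
    fun z hz => ?_
  · refine ⟨c * s, by positivity, eventually_atTop.2 ⟨1, fun z hz => ?_⟩⟩
    have hz₀ : 0 < z := hIci hz
    have := mul_le_mul_of_nonneg_left (hslope z hz) hz₀.le
    field_simp at this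
    linarith
  · have hz₀ : 0 < z := hIci hz
    have hηz := hη.pos z hz₀.le
    have hlead : (2 * kap * z * η z) ^ n ≤ del n * (del n + 1) * powerTail n z / z ^ 2 := by
      rw [← mul_powerTail_pow hn hz₀]
      gcongr
      exact hη.le_powerTail hn hz₀
    have hsource : c * (s * (s + 1) * z ^ (-s) / z ^ 2) = C * z ^ (-s) / z ^ 2 := by
      simp only [c]
      field_simp
    rw [hsource]
    exact (hreact z hz).trans (by gcongr)

end IsReactiveSolution

/-! ### The corrector -/

theorem alph_pos {n : ℕ} (hn : 2 ≤ n) : 0 < alph n := by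
  have := one_lt_cast hn
  have : gam n < 1 / 2 := one_div_lt_one_div_of_lt two_pos (by linarith)
  exact sub_pos.2 this

/-- The potential `n * (2 * κ * z * η + η ^ 2) ^ (n - 1) * (2 * κ * z + 2 * η)` of the corrector
equation, i.e. the derivative in `η` of the reaction term of the reactive profile. -/
noncomputable def linPotential (n : ℕ) (η : ℝ → ℝ) (z : ℝ) : ℝ :=
  n * reactant η z ^ (n - 1) * (2 * kap * z + 2 * η z)

/-- The source term of the corrector equation `h'' = linPotential n η * h + correctorSource`. -/
noncomputable def correctorSource (n : ℕ) (η η' : ℝ → ℝ) (z : ℝ) : ℝ :=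
  2 * n * kap3 * reactant η z ^ (n - 1) * z ^ 3 * η z - gam n * η z - alph n * z * η' z

/-- A function `h` with derivative `h'` that solves the corrector equation for `η` and is asymptotic
to `λ₀ * z ^ (2 - δ)` at infinity. -/
structure IsCorrectorSolution (n : ℕ) (η η' h h' : ℝ → ℝ) : Prop where
  continuousOn : ContinuousOn h (Ici 0)
  hasDerivs₂On : HasDerivs₂On h h'
    (fun z => linPotential n η z * h z + correctorSource n η η' z) (Ioi 0)
  tendsto_sub : Tendsto (fun z => h z - lam0 n * z ^ (2 - del n)) atTop (𝓝 0)

/-- The residual of `λ₀ * z ^ (2 - δ)` in the corrector equation. -/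
noncomputable def correctorResidual (n : ℕ) (η η' : ℝ → ℝ) (z : ℝ) : ℝ :=
  linPotential n η z * (lam0 n * z ^ (2 - del n)) + correctorSource n η η' z
    - lam0 n * ((2 - del n) * (1 - del n)) * z ^ (-del n)

theorem rpow_two_sub_del (n : ℕ) {z : ℝ} (hz : 0 < z) :
    z ^ (2 - del n) = z ^ 2 * z ^ (-del n) := by
  rw [sub_eq_add_neg, Real.rpow_add hz, Real.rpow_two]

namespace IsReactiveSolution

variable {n : ℕ} {η η' : ℝ → ℝ}

theorem le_linPotential (hη : IsReactiveSolution n η η') (hn : 2 ≤ n) {z : ℝ} (hz : 0 < z) :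
    n * ((2 * kap * z) ^ n * η z ^ (n - 1)) ≤ linPotential n η z := by
  have hκ := kap_pos
  have hηz := hη.pos z hz.le
  have hq := hη.mul_lt_reactant hz.le
  calc n * ((2 * kap * z) ^ n * η z ^ (n - 1))
      = n * (2 * kap * z * η z) ^ (n - 1) * (2 * kap * z) := by
        rw [← pow_sub_one_mul (by omega : n ≠ 0) (2 * kap * z), mul_pow _ (η z)]
        ring
    _ ≤ n * reactant η z ^ (n - 1) * (2 * kap * z + 2 * η z) := by
        have : 0 < reactant η z := lt_of_le_of_lt (by positivity) hq
        gcongr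
        linarith

theorem linPotential_mul_sq_le (hη : IsReactiveSolution n η η') (hn : 2 ≤ n) {z : ℝ}
    (hz : 0 < z) :
    linPotential n η z * z ^ 2 ≤ eulerCoeff n * (1 + powerTail n z / (kap * z)) ^ n := by
  have hκ := kap_pos
  have hηz := hη.pos z hz.le
  have htail := powerTail_pos hn hz
  have hup := hη.le_powerTail hn hz
  set x := powerTail n z / (kap * z)
  have hx : kap * z * x = powerTail n z := mul_div_cancel₀ _ (by positivity)
  have hreact : reactant η z ≤ 2 * kap * z * powerTail n z * (1 + x) := by
    calc reactant η z ≤ 2 * kap * z * powerTail n z + powerTail n z ^ 2 := by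
          unfold reactant
          gcongr
      _ ≤ 2 * kap * z * powerTail n z + 2 * (kap * z * x) * powerTail n z := by
          rw [hx]
          nlinarith
      _ = _ := by ring
  have hslope : 2 * kap * z + 2 * η z ≤ 2 * kap * z * (1 + x) := by linarith
  have hreact₀ : 0 ≤ reactant η z := le_trans (by positivity) (hη.mul_lt_reactant hz.le).le
  calc linPotential n η z * z ^ 2
      ≤ n * (2 * kap * z * powerTail n z * (1 + x)) ^ (n - 1) * (2 * kap * z * (1 + x))
          * z ^ 2 := by
        unfold linPotential
        gcongr
    _ = n * ((2 * kap * z) ^ n * powerTail n z ^ (n - 1)) * z ^ 2 * (1 + x) ^ n := by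
        rw [← pow_sub_one_mul (by omega : n ≠ 0) (2 * kap * z),
          ← pow_sub_one_mul (by omega : n ≠ 0) (1 + x), mul_pow, mul_pow]
        ring
    _ = eulerCoeff n * (1 + x) ^ n := by
        rw [mul_pow_mul_powerTail_pow hn hz, eulerCoeff]
        field_simp

theorem linPotential_mul_leUpTo (hη : IsReactiveSolution n η η') (hn : 2 ≤ n) :
    LEUpTo (2 * del n + 1) (fun z => linPotential n η z * (lam0 n * z ^ (2 - del n)))
      fun z => lam0 n * eulerCoeff n * z ^ (-del n) := by
  have hκ := kap_pos
  have hlam := lam_pos hn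
  have hlam0 := lam0_nonneg hn
  have hM := eulerCoeff_pos hn
  set X := lam n / kap
  set K : ℝ := n * (1 + X) ^ (n - 1)
  refine ⟨lam0 n * eulerCoeff n * K * X, by positivity, eventually_atTop.2 ⟨1, fun z hz => ?_⟩⟩
  have hz₀ : 0 < z := by linarith
  have htail := powerTail_pos hn hz₀
  have hx : powerTail n z / (kap * z) ≤ X :=
    div_le_div₀ hlam.le (powerTail_le_lam hn hz) hκ (le_mul_of_one_le_right hκ.le hz)
  calc linPotential n η z * (lam0 n * z ^ (2 - del n))
      = lam0 n * z ^ (-del n) * (linPotential n η z * z ^ 2) := by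
        rw [rpow_two_sub_del n hz₀]
        ring
    _ ≤ lam0 n * z ^ (-del n) * (eulerCoeff n * (1 + K * (powerTail n z / (kap * z)))) := by
        refine mul_le_mul_of_nonneg_left ((hη.linPotential_mul_sq_le hn hz₀).trans ?_)
          (by positivity)
        gcongr
        exact one_add_pow_le_one_add_mul (by positivity) hx n
    _ = lam0 n * eulerCoeff n * z ^ (-del n)
          + lam0 n * eulerCoeff n * K / kap * (z ^ (-del n) * powerTail n z / z) := by
        field_simp
    _ = _ := by
        rw [rpow_neg_mul_powerTail_div n hz₀]
        ring

theorem le_reactant_pow_mul (hη : IsReactiveSolution n η η') (hn : 2 ≤ n) {z : ℝ} (hz : 0 < z) :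
    del n * (del n + 1) / (2 * kap) * (powerTail n z - n * (powerTail n z - η z))
      ≤ reactant η z ^ (n - 1) * z ^ 3 * η z := by
  have hκ := kap_pos
  have hηz := hη.pos z hz.le
  have hpow := pow_sub_pow_le_pow_mul_sub hηz.le (hη.le_powerTail hn hz) n
  calc del n * (del n + 1) / (2 * kap) * (powerTail n z - n * (powerTail n z - η z))
      = (2 * kap * z) ^ n * (powerTail n z ^ n
          - n * powerTail n z ^ (n - 1) * (powerTail n z - η z)) * z ^ 2 / (2 * kap) := by
        have hsplit : (2 * kap * z) ^ n * (powerTail n z ^ n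
              - n * powerTail n z ^ (n - 1) * (powerTail n z - η z))
            = (2 * kap * z) ^ n * powerTail n z ^ (n - 1)
              * (powerTail n z - n * (powerTail n z - η z)) := by
          rw [← pow_sub_one_mul (by omega : n ≠ 0) (powerTail n z)]
          ring
        rw [hsplit, mul_pow_mul_powerTail_pow hn hz]
        field_simp
    _ ≤ (2 * kap * z) ^ n * η z ^ n * z ^ 2 / (2 * kap) := by
        gcongr
        linarith
    _ = (2 * kap * z * η z) ^ (n - 1) * z ^ 3 * η z := by
        rw [← mul_pow, ← pow_sub_one_mul (by omega : n ≠ 0)]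
        field_simp
    _ ≤ reactant η z ^ (n - 1) * z ^ 3 * η z := by
        gcongr
        exact (hη.mul_lt_reactant hz.le).le

/-- The value of `lam0` is the one for which the terms of order `z ^ (-δ)` cancel. -/
theorem correctorResidual_leUpTo_zero (hη : IsReactiveSolution n η η') (hn : 4 ≤ n) :
    LEUpTo (delp n) (correctorResidual n η η') fun _ => 0 := by
  have hn₂ : 2 ≤ n := by omega
  have hκ := kap_pos
  have hδ := del_pos hn₂
  obtain ⟨C₁, hC₁, hpot⟩ := (hη.linPotential_mul_leUpTo hn₂).of_exponent_le (delp_le hn₂)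
  obtain ⟨C₂, hC₂, hgap⟩ := hη.powerTail_leUpTo hn
  obtain ⟨C₃, hC₃, hslope⟩ := (hη.neg_mul_deriv_leUpTo hn₂).of_exponent_le (delp_le hn₂)
  set c : ℝ := n * kap / 6 * (del n * (del n + 1) / (2 * kap))
  refine ⟨C₁ + (c * n + gam n) * C₂ + alph n * C₃, ?_, ?_⟩
  · have := (gam_pos n).le
    have := (alph_pos hn₂).le
    positivity
  filter_upwards [hpot, hgap, hslope, eventually_gt_atTop 0] with z hpot hgap hslope hz
  have hreact := mul_le_mul_of_nonneg_left (hη.le_reactant_pow_mul hn₂ hz)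
    (by positivity : 0 ≤ n * kap / 6)
  have hgapc := mul_le_mul_of_nonneg_left hgap
    (by have := (gam_pos n).le; positivity : 0 ≤ c * n + gam n)
  have hslope' := mul_le_mul_of_nonneg_left hslope (alph_pos hn₂).le
  have hcancel := lam0_mul hn₂
  simp only [powerTail, eulerCoeff, c] at hpot hreact hgapc hslope'
  simp only [kap3] at hcancel
  simp only [correctorResidual, correctorSource, kap3, c]
  linear_combination hpot + hreact + hgapc + hslope' + z ^ (-del n) * hcancel

end IsReactiveSolution

namespace IsCorrectorSolution

variable {n : ℕ} {η η' h h' : ℝ → ℝ}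

theorem neg_phi2_leUpTo_zero (hh : IsCorrectorSolution n η η' h h')
    (hη : IsReactiveSolution n η η') (hn : 4 ≤ n) :
    LEUpTo (delp n - 2) (fun z => -phi2 n h z) fun _ => 0 := by
  have hn₂ : 2 ≤ n := by omega
  obtain ⟨b, hcoef⟩ := hη.exists_eulerCoeff_mul_le hn₂
  obtain ⟨C, -, hres⟩ := hη.correctorResidual_leUpTo_zero hn
  have hδ := one_lt_del hn₂
  have hp := two_mul_del_lt_delp hn
  have hpM := delp_mul_succ_le hn₂
  have hphi : (fun z => -phi2 n h z) = fun z => lam0 n * z ^ (-(del n - 2)) - h z := by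
    funext z
    rw [phi2, neg_sub]
    ring
  have hderivs := ((hasDerivs₂On_rpow_neg (del n - 2)).const_mul (lam0 n)).sub hh.hasDerivs₂On
  have hlim : Tendsto (fun z => -phi2 n h z) atTop (𝓝 0) := by
    simpa only [neg_zero, phi2, neg_mul, neg_add_eq_sub] using hh.tendsto_sub.neg
  rw [← hphi] at hderivs
  refine leUpTo_zero_of_euler_subsolution (M := eulerCoeff n) (b := b) (C := C) hderivs hlim ?_
    (by linarith) le_rfl (by linarith) (by nlinarith) (Or.inr (by nlinarith))
  filter_upwards [hres, eventually_gt_atTop 0] with z hres hz hw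
  have hpot := mul_le_mul_of_nonneg_right ((hcoef z hz).trans (hη.le_linPotential hn₂ hz)) hw.le
  have hdecay : z ^ (-(delp n - 2)) / z ^ 2 = z ^ (-delp n) := by
    rw [← Real.rpow_two, ← Real.rpow_sub hz]
    ring_nf
  have hpower : z ^ (-(del n - 2)) / z ^ 2 = z ^ (-del n) := by
    rw [← Real.rpow_two, ← Real.rpow_sub hz]
    ring_nf
  rw [mul_div_assoc C, mul_div_assoc _ (z ^ (-(del n - 2))), hdecay, hpower]
  simp only [correctorResidual, phi2] at hres hpot ⊢
  linear_combination hpot + hres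

theorem exists_le_phi2 (hh : IsCorrectorSolution n η η' h h') (hn : 4 ≤ n) (z₀ : ℝ) :
    ∃ C, ∀ z ∈ Icc 0 z₀, C ≤ phi2 n h z := by
  have hcont : ContinuousOn (phi2 n h) (Icc 0 z₀) :=
    (continuousOn_const.mul (continuousOn_id.rpow_const fun z _ =>
      Or.inr (sub_nonneg.2 (del_le_two hn)))).add (hh.continuousOn.mono Icc_subset_Ici_self)
  obtain ⟨C, hC⟩ := isCompact_Icc.bddBelow_image hcont
  exact ⟨C, fun z hz => hC (mem_image_of_mem _ hz)⟩

end IsCorrectorSolution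

/-! ### The diffusive profile -/

theorem mu1_nonneg {y : ℝ} (hy : 0 ≤ y) : 0 ≤ mu1 y :=
  mul_nonneg (by positivity)
    (intervalIntegral.integral_nonneg (by linarith) fun _ _ => (Real.exp_pos _).le)

theorem mu1_le {y : ℝ} (hy : 0 ≤ y) : mu1 y ≤ kap * y := by
  have hint : ∫ σ in (0 : ℝ)..y / 2, Real.exp (-σ ^ 2) ≤ ∫ _ in (0 : ℝ)..y / 2, (1 : ℝ) :=
    intervalIntegral.integral_mono_on (by linarith)
      (Continuous.intervalIntegrable (by fun_prop) _ _)
      (Continuous.intervalIntegrable (by fun_prop) _ _)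
      fun σ _ => Real.exp_le_one_iff.2 (neg_nonpos.2 (sq_nonneg σ))
  rw [intervalIntegral.integral_const, sub_zero, smul_eq_mul, mul_one] at hint
  calc mu1 y ≤ 2 / √Real.pi * (y / 2) := mul_le_mul_of_nonneg_left hint (by positivity)
    _ = kap * y := by rw [kap]; ring

theorem exists_mu1_le : ∃ U, ∀ y ≥ 0, mu1 y ≤ U := by
  refine ⟨2 / √Real.pi * ∫ σ : ℝ, Real.exp (-1 * σ ^ 2), fun y hy => ?_⟩
  refine mul_le_mul_of_nonneg_left ?_ (by positivity)
  rw [intervalIntegral.integral_of_le (by linarith)]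
  simpa only [neg_one_mul] using MeasureTheory.setIntegral_le_integral (s := Ioc 0 (y / 2))
    (integrable_exp_neg_mul_sq one_pos) (Eventually.of_forall fun x => (Real.exp_pos _).le)

/-- A positive function `μ` on `(0, ∞)` with derivatives `μ'` and `μ''` that solves the diffusive
profile equation and satisfies `μ y ∼ λ * y ^ (-δ)` at the origin. -/
structure IsDiffusiveSolution (n : ℕ) (μ μ' μ'' : ℝ → ℝ) : Prop where
  pos : ∀ y > 0, 0 < μ y
  hasDerivs₂On : HasDerivs₂On μ μ' μ'' (Ioi 0)
  ode : ∀ y > 0, μ'' y + y / 2 * μ' y + eps n * μ y = (2 * mu1 y * μ y) ^ n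
  tendsto_mul : Tendsto (fun y => y ^ del n * μ y) (𝓝[>] 0) (𝓝 (lam n))

theorem hasDerivs₂On_powerTail_mul_one_sub_sq (n : ℕ) :
    HasDerivs₂On (fun y => powerTail n y * (1 - y ^ 2))
      (fun y => powerTail n y * ((del n - 2) * y - del n / y))
      (fun y => powerTail n y * (del n * (del n + 1) / y ^ 2 - (del n - 2) * (del n - 1)))
      (Ioi 0) := by
  intro y hy
  have hy₀ : y ≠ 0 := (mem_Ioi.1 hy).ne'
  have htail := (hasDerivs₂On_powerTail n y hy).1
  constructor
  · refine (htail.mul ((hasDerivAt_pow 2 y).const_sub 1)).congr_deriv ?_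
    field_simp
    ring
  · refine (htail.mul (((hasDerivAt_id' y).const_mul (del n - 2)).sub
      ((hasDerivAt_inv hy₀).const_mul (del n)))).congr_deriv ?_
    simp only [Pi.sub_apply]
    field_simp
    ring

theorem powerTail_mul_one_sub_sq_subsolution {n : ℕ} (hn : 4 ≤ n) {y : ℝ} (hy : y ∈ Ioo (0 : ℝ) 1) :
    (2 * kap * y) ^ n * (powerTail n y * (1 - y ^ 2)) ^ n
      ≤ powerTail n y * (del n * (del n + 1) / y ^ 2 - (del n - 2) * (del n - 1))
        + y / 2 * (powerTail n y * ((del n - 2) * y - del n / y))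
        + eps n * (powerTail n y * (1 - y ^ 2)) := by
  have hn₂ : 2 ≤ n := by omega
  obtain ⟨hy₀, hy₁⟩ := hy
  have hδ := one_lt_del hn₂
  have hδ₂ := del_le_two hn
  have htail := powerTail_pos hn₂ hy₀
  have hysq : y ^ 2 < 1 := by nlinarith
  have heps : 0 < eps n := one_div_pos.2 (sub_pos.2 (one_lt_cast hn₂))
  have hbracket : 0 ≤ del n * (del n + 1) + (2 - del n) * (del n - 1) - del n / 2
      - (2 - del n) * y ^ 2 / 2 + eps n * (1 - y ^ 2) := by
    have : 0 ≤ (2 - del n) * (del n - 1) := mul_nonneg (by linarith) (by linarith)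
    have : 0 ≤ eps n * (1 - y ^ 2) := mul_nonneg heps.le (by linarith)
    nlinarith
  calc (2 * kap * y) ^ n * (powerTail n y * (1 - y ^ 2)) ^ n
      = del n * (del n + 1) * powerTail n y / y ^ 2 * (1 - y ^ 2) ^ n := by
        rw [mul_pow _ (1 - y ^ 2), ← mul_assoc, ← mul_pow, mul_powerTail_pow hn₂ hy₀]
    _ ≤ del n * (del n + 1) * powerTail n y / y ^ 2 * (1 - y ^ 2) := by
        refine mul_le_mul_of_nonneg_left ?_ (by positivity)
        exact pow_le_of_le_one (by linarith) (by linarith [sq_nonneg y]) (by omega)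
    _ ≤ _ := by
        rw [← sub_nonneg]
        refine (mul_nonneg htail.le hbracket).trans_eq ?_
        field_simp
        ring

namespace IsDiffusiveSolution

variable {n : ℕ} {μ μ' μ'' : ℝ → ℝ}

theorem powerTail_eventually_lt_mul (hμ : IsDiffusiveSolution n μ μ' μ'') (hn : 2 ≤ n) {ρ : ℝ}
    (hρ : 1 < ρ) : ∀ᶠ y in 𝓝[>] 0, powerTail n y < ρ * μ y := by
  have hlam := lam_pos hn
  have hlt : lam n / ρ < lam n := div_lt_self hlam hρ
  filter_upwards [hμ.tendsto_mul.eventually_const_lt hlt, self_mem_nhdsWithin] with y hy hy₀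
  have hypow : 0 < y ^ del n := Real.rpow_pos_of_pos hy₀ _
  rw [div_lt_iff₀ (by linarith)] at hy
  rw [powerTail, Real.rpow_neg (le_of_lt hy₀), ← div_eq_mul_inv, div_lt_iff₀ hypow]
  linarith

theorem powerTail_mul_one_sub_sq_le (hμ : IsDiffusiveSolution n μ μ' μ'') (hn : 4 ≤ n) :
    ∀ y ∈ Ioc 0 1, powerTail n y * (1 - y ^ 2) ≤ μ y := by
  have hn₂ : 2 ≤ n := by omega
  have hκ := kap_pos
  refine le_of_superlinear_subsolution (by omega) (hμ.hasDerivs₂On.mono Ioc_subset_Ioi_self)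
    ((hasDerivs₂On_powerTail_mul_one_sub_sq n).mono Ioc_subset_Ioi_self)
    (k := fun y => (2 * kap * y) ^ n) (p := fun y => y / 2) (q := fun _ => eps n)
    (fun y hy => hμ.pos y hy.1) (fun y hy => ?_) (fun y hy => ?_)
    (fun y hy => powerTail_mul_one_sub_sq_subsolution hn hy) (fun ρ hρ => ?_) ?_
  · have := hy.1
    positivity
  · have := hμ.pos y hy.1
    have := mu1_nonneg hy.1.le
    rw [hμ.ode y hy.1, ← mul_pow]
    gcongr ?_ ^ n
    nlinarith [mu1_le hy.1.le]
  · filter_upwards [hμ.powerTail_eventually_lt_mul hn₂ hρ, self_mem_nhdsWithin] with y hy hy₀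
    exact (mul_le_of_le_one_right (powerTail_pos hn₂ hy₀).le
      (by linarith [sq_nonneg y])).trans_lt hy
  · simpa only [one_pow, sub_self, mul_zero] using (hμ.pos 1 one_pos).le

theorem powerTail_le_mul (hμ : IsDiffusiveSolution n μ μ' μ'') (hn : 4 ≤ n) {T z : ℝ}
    (hz : 0 < z) (hzT : 2 * z ≤ T) : 3 / 4 * powerTail n z ≤ T ^ (-del n) * μ (z / T) := by
  have hT : 0 < T := by linarith
  have hy : 0 < z / T := div_pos hz hT
  have hyhalf : z / T ≤ 1 / 2 := by
    rw [div_le_iff₀ hT]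
    linarith
  have hysq : (z / T) ^ 2 ≤ 1 / 4 := by nlinarith
  have hbarrier := mul_le_mul_of_nonneg_left
    (hμ.powerTail_mul_one_sub_sq_le hn (z / T) ⟨hy, by linarith⟩) (Real.rpow_nonneg hT.le (-del n))
  rw [← mul_assoc, rpow_neg_mul_powerTail_comp_div n hT hz.le] at hbarrier
  nlinarith [powerTail_pos (by omega : 2 ≤ n) hz]

theorem exists_le_mu3 (hμ : IsDiffusiveSolution n μ μ' μ'') (hn : 4 ≤ n) :
    ∃ C, ∀ y ≥ 0, C ≤ mu3 n μ y := by
  have hn₂ : 2 ≤ n := by omega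
  have hlam := lam_pos hn₂
  have hδ := del_pos hn₂
  refine ⟨-(|μ 0| + lam n), fun y hy => ?_⟩
  have hμ₀ := neg_abs_le (μ 0)
  change _ ≤ μ y - powerTail n y
  rcases eq_or_lt_of_le hy with rfl | hy₀
  · rw [powerTail, Real.zero_rpow (by linarith)]
    linarith
  rcases le_total y 1 with hy₁ | hy₁
  · have hbarrier := hμ.powerTail_mul_one_sub_sq_le hn y ⟨hy₀, hy₁⟩
    have hpow : y ^ (2 - del n) ≤ 1 := Real.rpow_le_one hy hy₁ (by linarith [del_le_two hn])
    rw [rpow_two_sub_del n hy₀] at hpow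
    have : powerTail n y * y ^ 2 ≤ lam n := by
      rw [powerTail]
      nlinarith
    linarith [abs_nonneg (μ 0)]
  · linarith [hμ.pos y hy₀, powerTail_le_lam hn₂ hy₁, abs_nonneg (μ 0)]

end IsDiffusiveSolution

/-! ### The lower bound for `φ` -/

/-- The function `t ^ γ * φ(x, t)` in the inner variables `T = t ^ γ` and `z = |x| / t ^ α`, for
which `|x| / √t = z / T`. -/
noncomputable def innerPhi (n : ℕ) (η μ h : ℝ → ℝ) (T z : ℝ) : ℝ :=
  η z + T ^ (-del n) * mu3 n μ (z / T) + phi2 n h z / T ^ 2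

theorem phiFun_eq_innerPhi {n : ℕ} (hn : 2 ≤ n) (η μ h : ℝ → ℝ) (x : ℝ) {t : ℝ} (ht : 0 < t) :
    phiFun n η μ h x t = t ^ (-gam n) * innerPhi n η μ h (t ^ gam n) (|x| / t ^ alph n) := by
  have hsqrt : t ^ alph n * t ^ gam n = √t := by
    rw [← Real.rpow_add ht, alph_add_gam, Real.sqrt_eq_rpow]
  have heps : t ^ (-eps n) = t ^ (-gam n) * (t ^ gam n) ^ (-del n) := by
    rw [eps_eq_gam_mul hn, ← Real.rpow_mul ht.le, ← Real.rpow_add ht]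
    ring_nf
  have hcube : t ^ (-(3 * gam n)) = t ^ (-gam n) / (t ^ gam n) ^ 2 := by
    rw [← Real.rpow_mul_natCast ht.le, ← Real.rpow_sub ht]
    ring_nf
  rw [phiFun, innerPhi, div_div, hsqrt, heps, hcube]
  ring

theorem eventually_mul_rpow_neg_le_powerTail {n : ℕ} (hn : 2 ≤ n) {p : ℝ} (hp : del n < p)
    (C : ℝ) : ∀ᶠ z in atTop, C * z ^ (-p) ≤ powerTail n z := by
  have hlim := (tendsto_rpow_neg_atTop (sub_pos.2 hp)).const_mul C
  rw [mul_zero] at hlim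
  filter_upwards [hlim.eventually_le_const (lam_pos hn), eventually_gt_atTop 0] with z hz hz₀
  calc C * z ^ (-p) = C * z ^ (-(p - del n)) * z ^ (-del n) := by
        rw [mul_assoc, ← Real.rpow_add hz₀]
        ring_nf
    _ ≤ powerTail n z := by
        rw [powerTail]
        gcongr

theorem eventually_nonneg_innerPhi {n : ℕ} (hn : 4 ≤ n) {η η' μ μ' μ'' h h' : ℝ → ℝ}
    (hη : IsReactiveSolution n η η') (hμ : IsDiffusiveSolution n μ μ' μ'')
    (hh : IsCorrectorSolution n η η' h h') {z₀ : ℝ} (hz₀ : 0 ≤ z₀) :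
    ∀ᶠ T in atTop, ∀ z ∈ Icc 0 z₀, 0 ≤ innerPhi n η μ h T z := by
  have hn₂ : 2 ≤ n := by omega
  obtain ⟨a, ha, hlow⟩ := hη.exists_powerTail_add_le hn₂
  obtain ⟨C₁, hC₁⟩ := hμ.exists_le_mu3 hn
  obtain ⟨C₂, hC₂⟩ := hh.exists_le_phi2 hn z₀
  set m := powerTail n (z₀ + a)
  have hm : 0 < m := powerTail_pos hn₂ (by linarith)
  have hlim : Tendsto (fun T => m + T ^ (-del n) * C₁ + C₂ / T ^ 2) atTop (𝓝 m) := by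
    simpa only [zero_mul, add_zero] using (tendsto_const_nhds.add
      ((tendsto_rpow_neg_atTop (del_pos hn₂)).mul_const C₁)).add
        (tendsto_const_nhds.div_atTop (tendsto_pow_atTop two_ne_zero))
  filter_upwards [hlim.eventually_const_le hm, eventually_gt_atTop 0] with T hT hT₀ z hz
  have hmz : m ≤ η z :=
    (powerTail_le_of_le hn₂ (by linarith [hz.1]) (by linarith [hz.2])).trans (hlow z hz.1)
  refine hT.trans ?_
  unfold innerPhi
  gcongr
  · exact hC₁ _ (div_nonneg hz.1 hT₀.le)
  · exact hC₂ z hz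

/-- In `η` and `μ₃` the leading terms `± λ * z ^ (-δ)` cancel, which leaves `μ`. -/
theorem exists_sub_le_innerPhi {n : ℕ} {p : ℝ} {η h : ℝ → ℝ} (μ : ℝ → ℝ)
    (hη : LEUpTo p (powerTail n) η) (hh : LEUpTo (p - 2) (fun z => -phi2 n h z) fun _ => 0) :
    ∃ C, 0 ≤ C ∧ ∀ᶠ z in atTop, ∀ T > 0,
      T ^ (-del n) * μ (z / T) - C * ((1 + (z / T) ^ 2) * z ^ (-p)) ≤ innerPhi n η μ h T z := by
  obtain ⟨C₁, hC₁, hη⟩ := hη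
  obtain ⟨C₂, hC₂, hh⟩ := hh
  refine ⟨C₁ + C₂, add_nonneg hC₁ hC₂, ?_⟩
  filter_upwards [hη, hh, eventually_gt_atTop 0] with z hη hh hz T hT
  have hphi2 : -(C₂ * ((z / T) ^ 2 * z ^ (-p))) ≤ phi2 n h z / T ^ 2 := by
    have hpow : z ^ (-(p - 2)) = z ^ 2 * z ^ (-p) := by
      rw [← Real.rpow_two, ← Real.rpow_add hz]
      ring_nf
    calc -(C₂ * ((z / T) ^ 2 * z ^ (-p))) = -(C₂ * z ^ (-(p - 2))) / T ^ 2 := by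
          rw [hpow]
          ring
      _ ≤ phi2 n h z / T ^ 2 := by
          gcongr
          linarith
  have hmu3 : T ^ (-del n) * mu3 n μ (z / T) = T ^ (-del n) * μ (z / T) - powerTail n z := by
    rw [← rpow_neg_mul_powerTail_comp_div n hT hz.le, ← mul_sub]
    rfl
  have : 0 ≤ C₁ * ((z / T) ^ 2 * z ^ (-p)) := by positivity
  have : 0 ≤ C₂ * z ^ (-p) := by positivity
  rw [innerPhi, hmu3]
  linarith

theorem one_add_div_sq_mul_rpow_neg_le {p T z : ℝ} (hp : 2 ≤ p) (hT : 0 < T) (hTz : T ≤ 2 * z) :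
    (1 + (z / T) ^ 2) * z ^ (-p) ≤ 5 * 2 ^ (p - 2) * T ^ (-p) := by
  have hz : 0 < z := by linarith
  have hratio : 1 ≤ 4 * (z / T) ^ 2 := by
    have : 1 / 2 ≤ z / T := by
      rw [le_div_iff₀ hT]
      linarith
    nlinarith
  have hpow {s : ℝ} (hs : 0 < s) : s ^ (-p) = s ^ (-(p - 2)) / s ^ 2 := by
    rw [← Real.rpow_two, ← Real.rpow_sub hs]
    ring_nf
  calc (1 + (z / T) ^ 2) * z ^ (-p) ≤ 5 * (z / T) ^ 2 * z ^ (-p) := by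
        gcongr
        linarith
    _ = 5 * z ^ (-(p - 2)) / T ^ 2 := by
        rw [hpow hz]
        field_simp
    _ ≤ 5 * (T / 2) ^ (-(p - 2)) / T ^ 2 := by
        gcongr 5 * ?_ / _
        exact Real.rpow_le_rpow_of_nonpos (half_pos hT) (by linarith) (by linarith)
    _ = 5 * 2 ^ (p - 2) * T ^ (-p) := by
        rw [hpow hT, Real.div_rpow hT.le two_pos.le, Real.rpow_neg two_pos.le, div_inv_eq_mul]
        ring

theorem exists_neg_le_innerPhi {n : ℕ} (hn : 4 ≤ n) {η η' μ μ' μ'' h h' : ℝ → ℝ}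
    (hη : IsReactiveSolution n η η') (hμ : IsDiffusiveSolution n μ μ' μ'')
    (hh : IsCorrectorSolution n η η' h h') :
    ∃ C, 0 ≤ C ∧ ∀ᶠ T in atTop, ∀ z ≥ 0, -(C * T ^ (-delp n)) ≤ innerPhi n η μ h T z := by
  have hn₂ : 2 ≤ n := by omega
  have hδ := one_lt_del hn₂
  have hp := two_mul_del_lt_delp hn
  obtain ⟨C, hC, hfar⟩ :=
    exists_sub_le_innerPhi μ (hη.powerTail_leUpTo hn) (hh.neg_phi2_leUpTo_zero hη hn)
  obtain ⟨z₀, hz₀⟩ := eventually_atTop.1 ((hfar.and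
    (eventually_mul_rpow_neg_le_powerTail hn₂ (by linarith : del n < delp n) (2 * C))).and
      (eventually_gt_atTop 0))
  refine ⟨C * (5 * 2 ^ (delp n - 2)), by positivity, ?_⟩
  filter_upwards [eventually_nonneg_innerPhi hn hη hμ hh (le_max_left 0 z₀),
    eventually_gt_atTop 0] with T hnear hT z hz
  have hbound : 0 ≤ C * (5 * 2 ^ (delp n - 2)) * T ^ (-delp n) := by positivity
  rcases le_or_gt z (max 0 z₀) with hzle | hzgt
  · linarith [hnear z ⟨hz, hzle⟩]
  obtain ⟨⟨hfar, hsmall⟩, hzpos⟩ := hz₀ z (le_max_right 0 z₀ |>.trans hzgt.le)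
  refine le_trans ?_ (hfar T hT)
  rcases le_total (2 * z) T with hzT | hTz
  · have hmain := hμ.powerTail_le_mul hn hzpos hzT
    have hysq : (z / T) ^ 2 ≤ 1 / 4 := by
      have : z / T ≤ 1 / 2 := by
        rw [div_le_iff₀ hT]
        linarith
      nlinarith [div_pos hzpos hT]
    have : 0 ≤ C * z ^ (-delp n) := by positivity
    nlinarith
  · have herror := mul_le_mul_of_nonneg_left
      (one_add_div_sq_mul_rpow_neg_le (by linarith : 2 ≤ delp n) hT hTz) hC
    have hpos : 0 < μ (z / T) := hμ.pos _ (div_pos hzpos hT)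
    have : 0 < T ^ (-del n) * μ (z / T) := mul_pos (Real.rpow_pos_of_pos hT _) hpos
    linarith

theorem exists_neg_le_phiFun {n : ℕ} (hn : 4 ≤ n) {η η' μ μ' μ'' h h' : ℝ → ℝ}
    (hη : IsReactiveSolution n η η') (hμ : IsDiffusiveSolution n μ μ' μ'')
    (hh : IsCorrectorSolution n η η' h h') :
    ∃ C, 0 ≤ C ∧ ∀ᶠ t in atTop, ∀ x,
      -(C * t ^ (-(gam n * (delp n + 1)))) ≤ phiFun n η μ h x t := by
  have hn₂ : 2 ≤ n := by omega
  obtain ⟨C, hC, hinner⟩ := exists_neg_le_innerPhi hn hη hμ hh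
  refine ⟨C, hC, ?_⟩
  filter_upwards [(tendsto_rpow_atTop (gam_pos n)).eventually hinner, eventually_gt_atTop 0]
    with t hinner ht x
  have hscale : t ^ (-(gam n * (delp n + 1))) = t ^ (-gam n) * (t ^ gam n) ^ (-delp n) := by
    rw [← Real.rpow_mul ht.le, ← Real.rpow_add ht]
    ring_nf
  have := mul_le_mul_of_nonneg_left (hinner (|x| / t ^ alph n) (by positivity))
    (Real.rpow_nonneg ht.le (-gam n))
  rw [phiFun_eq_innerPhi hn₂ η μ h x ht, hscale]
  linarith

/-! ### The potential -/

theorem neg_mul_pow_mul_le {k u U φ C E : ℝ} (m : ℕ) (hk : 0 ≤ k) (hu : 0 ≤ u) (huU : u ≤ U)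
    (hC : 0 ≤ C) (hE₀ : 0 ≤ E) (hE₁ : E ≤ 1) (hφ : -(C * E) ≤ φ) :
    -(k * (2 * u * φ + φ ^ 2) ^ m * (u + φ)) ≤ k * (C * (2 * U + C)) ^ m * (U + C) * E ^ m := by
  have hU : 0 ≤ U := hu.trans huU
  rcases le_or_gt 0 φ with hφ₀ | hφ₀
  · calc -(k * (2 * u * φ + φ ^ 2) ^ m * (u + φ)) ≤ 0 := neg_nonpos.2 (by positivity)
      _ ≤ _ := by positivity
  have hCE : C * E ≤ C := mul_le_of_le_one_right hC hE₁
  have habsφ : |φ| ≤ C * E := by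
    rw [abs_of_neg hφ₀]
    linarith
  have hfactor : |2 * u + φ| ≤ 2 * U + C := abs_le.2 ⟨by linarith, by linarith⟩
  have hsum : |u + φ| ≤ U + C := abs_le.2 ⟨by linarith, by linarith⟩
  calc -(k * (2 * u * φ + φ ^ 2) ^ m * (u + φ)) ≤ |k * (2 * u * φ + φ ^ 2) ^ m * (u + φ)| :=
        neg_le_abs _
    _ = k * (|φ| * |2 * u + φ|) ^ m * |u + φ| := by
        rw [abs_mul, abs_mul, abs_pow, abs_of_nonneg hk, ← abs_mul φ]
        ring_nf
    _ ≤ k * (C * E * (2 * U + C)) ^ m * (U + C) := by gcongr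
    _ = k * (C * (2 * U + C)) ^ m * (U + C) * E ^ m := by
        rw [mul_right_comm C, mul_pow _ E]
        ring

theorem potential_negative_part_bound_even_general {n : ℕ} (hn : 4 ≤ n)
    {η η' μ μ' μ'' h h' : ℝ → ℝ} (hη : IsReactiveSolution n η η')
    (hμ : IsDiffusiveSolution n μ μ' μ'') (hh : IsCorrectorSolution n η η' h h') :
    ∃ τ₁ : ℝ, 1 ≤ τ₁ ∧ ∃ c : ℝ, 0 < c ∧ ∀ t ≥ τ₁, ∀ x : ℝ,
      max (-(Vhat n η μ h x t)) 0 ≤ c * t ^ (-(gam n * ((n : ℝ) - 1) * (delp n + 1))) := by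
  obtain ⟨U, hU⟩ := exists_mu1_le
  obtain ⟨C, hC, hφ⟩ := exists_neg_le_phiFun hn hη hμ hh
  obtain ⟨τ, hτ⟩ := eventually_atTop.1 hφ
  have hU₀ : 0 ≤ U := (mu1_nonneg le_rfl).trans (hU 0 le_rfl)
  set K := 2 * n * (C * (2 * U + C)) ^ (n - 1) * (U + C)
  have : 0 ≤ K := by positivity
  refine ⟨max 1 τ, le_max_left _ _, K + 1, by positivity, fun t ht x => ?_⟩
  have ht₁ : 1 ≤ t := (le_max_left _ _).trans ht
  have hy : 0 ≤ |x| / √t := by positivity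
  have hexp : 0 ≤ gam n * (delp n + 1) :=
    mul_nonneg (gam_pos n).le (by linarith [delp_nonneg (by omega : 2 ≤ n)])
  have hrate : t ^ (-(gam n * ((n : ℝ) - 1) * (delp n + 1)))
      = (t ^ (-(gam n * (delp n + 1)))) ^ (n - 1) := by
    rw [← Real.rpow_mul_natCast (by linarith), Nat.cast_pred (by omega)]
    ring_nf
  rw [hrate]
  refine max_le ?_ (by positivity)
  calc -(Vhat n η μ h x t) ≤ K * (t ^ (-(gam n * (delp n + 1)))) ^ (n - 1) :=
        neg_mul_pow_mul_le (n - 1) (by positivity) (mu1_nonneg hy) (hU _ hy) hC (by positivity)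
          (Real.rpow_le_one_of_one_le_of_nonpos ht₁ (neg_nonpos.2 hexp))
          (hτ t ((le_max_right _ _).trans ht) x)
    _ ≤ _ := by
        gcongr
        exact le_add_of_nonneg_right zero_le_one

theorem IsReactiveProfile.isReactiveSolution {n : ℕ} {η : ℝ → ℝ} (hη : IsReactiveProfile n η) :
    IsReactiveSolution n η (derivWithin η (Ici 0)) := by
  obtain ⟨hsmooth, hpos, hode, -, hlim⟩ := hη
  refine ⟨hsmooth.continuousOn, hpos, fun z hz => ?_, hlim⟩
  have hderivs := hasDerivs₂On_derivWithin_Ici hsmooth z hz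
  exact ⟨hderivs.1, hderivs.2.congr_deriv (hode z (mem_Ici_of_Ioi hz))⟩

theorem IsDiffusiveProfile.isDiffusiveSolution {n : ℕ} {μ : ℝ → ℝ}
    (hμ : IsDiffusiveProfile n μ) : IsDiffusiveSolution n μ (deriv μ) (deriv (deriv μ)) := by
  obtain ⟨hsmooth, hpos, hode, hlim, -⟩ := hμ
  exact ⟨hpos, hasDerivs₂On_of_contDiffOn_isOpen isOpen_Ioi hsmooth, hode, hlim⟩

theorem IsCorrector.isCorrectorSolution {n : ℕ} {η h : ℝ → ℝ} (hh : IsCorrector n η h) :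
    IsCorrectorSolution n η (derivWithin η (Ici 0)) h (derivWithin h (Ici 0)) := by
  obtain ⟨hsmooth, hode, -, hlim⟩ := hh
  refine ⟨hsmooth.continuousOn, fun z hz => ?_, hlim⟩
  have hderivs := hasDerivs₂On_derivWithin_Ici hsmooth z hz
  refine ⟨hderivs.1, hderivs.2.congr_deriv ?_⟩
  simp only [linPotential, correctorSource, reactant]
  linear_combination hode z (mem_Ici_of_Ioi hz)

/-- For n even, n ≥ 4, the negative part of the potential V̂ is bounded by
c t^{−γ(n−1)(δ'+1)} for all large times. -/
theorem potential_negative_part_bound_even (n : ℕ) (hn : 4 ≤ n) (heven : Even n)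
    (η μ h : ℝ → ℝ)
    (hη : IsReactiveProfile n η) (hμ : IsDiffusiveProfile n μ) (hh : IsCorrector n η h) :
    ∃ τ₁ : ℝ, 1 ≤ τ₁ ∧ ∃ c : ℝ, 0 < c ∧ ∀ t ≥ τ₁, ∀ x : ℝ,
      max (-(Vhat n η μ h x t)) 0 ≤ c * t ^ (-(gam n * ((n : ℝ) - 1) * (delp n + 1))) :=
  potential_negative_part_bound_even_general hn hη.isReactiveSolution hμ.isDiffusiveSolution
    hh.isCorrectorSolution
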